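/- Let a ∈ (0,1) and let (f,p) be a solution of problem (P) on (0,T) with initial datum f_I satisfying conditions (i)–(iii), such that f(·,t) is integrable on [−1,1] for each t. Then the buyer and vendor masses are conserved: for all t ∈ (0,T), ∫_{−1}^{p(t)} f(x,t) dx = ∫_{−1}^{p_I} f_I(x) dx and ∫_{p(t)}^{1} f(x,t) dx = ∫_{p_I}^{1} f_I(x) dx. -/

import Mathlib

open MeasureTheory

/-- The 1D heat kernel `K(x,t) = (4πt)^{-1/2} exp(-x²/(4t))`. -/
noncomputable def heatK (x t : ℝ) : ℝ :=
  (Real.sqrt (4 * Real.pi * t))⁻¹ * Real.exp (-(x ^ 2) / (4 * t))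

/-- The Neumann heat kernel on `[-1,1]`:
`Γ(x,x';t) = Σ_{k∈ℤ} K(x − (2k + (−1)^{|k|} x'), t)`. -/
noncomputable def heatGamma (x x' t : ℝ) : ℝ :=
  ∑' k : ℤ, heatK (x - (2 * (k : ℝ) + (-1 : ℝ) ^ k.natAbs * x')) t

/-- The flux `λ(s) = −∂ₓ f(p(s), s)` at the free boundary. -/
noncomputable def flux (f : ℝ → ℝ → ℝ) (p : ℝ → ℝ) (s : ℝ) : ℝ :=
  -deriv (fun x => f x s) (p s)

/-- `ā(s) = min {a, 1 − p(s), 1 + p(s)}`. -/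
noncomputable def abar (a : ℝ) (p : ℝ → ℝ) (s : ℝ) : ℝ :=
  min a (min (1 - p s) (1 + p s))

/-- The sup norm `‖h‖_{L^∞(−1,1)}` (for continuous `h`). -/
noncomputable def supNorm (h : ℝ → ℝ) : ℝ := ⨆ x : Set.Icc (-1:ℝ) 1, |h x.1|

/-- Conditions (i)–(iii) on the initial datum `f_I ∈ C²([−1,1])`:
(i) unique zero `p_I ∈ (−1,1)`, positive to the left, negative to the right;
(ii) Neumann conditions `∂ₓf_I(±1) = 0`;
(iii) `λ_I = −∂ₓ f_I(p_I) > 0` and `−∂ₓ f_I > λ_I/2` on `(p_I − a₀, p_I + a₀)`. -/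
structure IsInitialDatum (fI : ℝ → ℝ) (pI a₀ lamI : ℝ) : Prop where
  smooth : ContDiffOn ℝ 2 fI (Set.Icc (-1) 1)
  pI_mem : pI ∈ Set.Ioo (-1 : ℝ) 1
  zero_at : fI pI = 0
  pos_left : ∀ x ∈ Set.Ico (-1 : ℝ) pI, 0 < fI x
  neg_right : ∀ x ∈ Set.Ioc pI 1, fI x < 0
  neumann_left : derivWithin fI (Set.Icc (-1) 1) (-1) = 0
  neumann_right : derivWithin fI (Set.Icc (-1) 1) 1 = 0
  lamI_eq : lamI = -deriv fI pI
  lamI_pos : 0 < lamI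
  slope : ∀ x ∈ Set.Ioo (pI - a₀) (pI + a₀), lamI / 2 < -deriv fI x

/-- A solution `(f, p)` of problem (P) on the time set `J` with parameter `a` and
initial datum `f_I`: `p` is a continuous curve in `(−1,1)`, `p(t)` is the unique zero
of `f(·,t)` (positive to the left, negative to the right), `f(·,t)` is differentiable
at `p(t)`, the flux is locally integrable on `J`, and the Duhamel identity holds. -/
structure IsSolutionP (a : ℝ) (fI : ℝ → ℝ) (J : Set ℝ) (f : ℝ → ℝ → ℝ) (p : ℝ → ℝ) : Prop where
  p_cont : ContinuousOn p J
  p_mem : ∀ t ∈ J, p t ∈ Set.Ioo (-1 : ℝ) 1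
  zero_at : ∀ t ∈ J, f (p t) t = 0
  pos_left : ∀ t ∈ J, ∀ x ∈ Set.Ico (-1 : ℝ) (p t), 0 < f x t
  neg_right : ∀ t ∈ J, ∀ x ∈ Set.Ioc (p t) 1, f x t < 0
  diff_at : ∀ t ∈ J, DifferentiableAt ℝ (fun x => f x t) (p t)
  flux_loc_int : LocallyIntegrableOn (flux f p) J
  duhamel : ∀ t ∈ J, ∀ x ∈ Set.Icc (-1 : ℝ) 1,
      f x t = (∫ x' in (-1 : ℝ)..1, heatGamma x x' t * fI x')
        + ∫ s in (0 : ℝ)..t,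
            (heatGamma x (p s - abar a p s) (t - s)
              - heatGamma x (p s + abar a p s) (t - s)) * flux f p s

/-- The Duhamel iterate with data `(p_n, λ_n)` and initial datum `f_I`. -/
noncomputable def duhamelIterate (a : ℝ) (fI pn lamn : ℝ → ℝ) (x t : ℝ) : ℝ :=
  (∫ x' in (-1 : ℝ)..1, heatGamma x x' t * fI x')
    + ∫ s in (0 : ℝ)..t,
        (heatGamma x (pn s - a) (t - s) - heatGamma x (pn s + a) (t - s)) * lamn s

/-!
Write `F(x, t) = ∫_{-1}^x f(·, t)`. By the sign condition, `p(t)` maximises `F(·, t)`. Integrating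
the Duhamel identity in `x` turns it into `F = U + ∫₀ᵗ H λ` with a bounded kernel `H`, where `U` is
the primitive of the heat flow of `f_I`. Near the free boundary the sources `p ± ā` are far away, so
`F` is differentiable in `t` with `∂_t F = ∂_x f + λ`, which vanishes on the curve; by the
envelope theorem the buyer mass `F(p(t), t)` is constant. As `t → 0`, the bathtub principle
`U(x, t) ≤ ∫_{-1}^{p_I} f_I` and the limit `U(p_I, t) → ∫_{-1}^{p_I} f_I` identify the constant. The
vendor mass is the total mass, for which `H` vanishes, minus the buyer mass.

The flux `λ` is only assumed integrable away from `t = 0`. If at every time the Duhamel integral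
diverges at points accumulating at the free boundary, then it has the junk value `0` there, so `f`
agrees with the heat flow of `f_I` and `λ` is bounded by the Lipschitz constant of `f_I`. Otherwise,
the analyticity of cosine series shows that `ā² λ` is integrable, because `ā²` is comparable to the
leading cosine coefficient of the dipole at `p ± ā`. This suffices for `∫_{x₁}^{x₂} f(·, t)` to
converge to `∫_{x₁}^{x₂} f_I` as `t → 0`, so `p` stays away from `±1` and `ā` is bounded below.
-/

open Set Filter Topology

/-! ### Fourier side of the `4`-periodic heat kernel -/

/-- The frequency `(n + 1) π / 2` of the `n`-th nonconstant Neumann cosine mode of `[-1, 1]`. -/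
noncomputable def heatFreq (n : ℕ) : ℝ := ((n : ℝ) + 1) * Real.pi / 2

/-- The damping factor `exp (-kₙ² τ)` of the `n`-th cosine mode under the heat flow. -/
noncomputable def heatMode (n : ℕ) (τ : ℝ) : ℝ := Real.exp (-(heatFreq n) ^ 2 * τ)

/-- The heat kernel of the circle of length `4`, given by its Fourier series. -/
noncomputable def circleHeat (z τ : ℝ) : ℝ :=
  1 / 4 + ∑' n : ℕ, heatMode n τ * Real.cos (heatFreq n * z) / 2

/-- The space derivative of `circleHeat`. -/
noncomputable def circleHeatDeriv (z τ : ℝ) : ℝ :=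
  ∑' n : ℕ, -(heatFreq n * heatMode n τ * Real.sin (heatFreq n * z) / 2)

/-- The odd space primitive of `circleHeat`. -/
noncomputable def circleHeatPrim (z τ : ℝ) : ℝ :=
  z / 4 + ∑' n : ℕ, heatMode n τ * Real.sin (heatFreq n * z) / (2 * heatFreq n)

theorem add_one_le_heatFreq (n : ℕ) : (n : ℝ) + 1 ≤ heatFreq n := by
  unfold heatFreq
  nlinarith [Real.pi_gt_three, (Nat.cast_nonneg n : (0 : ℝ) ≤ n)]

theorem one_le_heatFreq (n : ℕ) : (1 : ℝ) ≤ heatFreq n := by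
  linarith [add_one_le_heatFreq n, (Nat.cast_nonneg n : (0 : ℝ) ≤ n)]

theorem heatFreq_pos (n : ℕ) : 0 < heatFreq n := one_pos.trans_le (one_le_heatFreq n)

theorem heatFreq_mul_add_four (n : ℕ) (z : ℝ) :
    heatFreq n * (z + 4) = heatFreq n * z + (n + 1 : ℕ) * (2 * Real.pi) := by
  unfold heatFreq; push_cast; ring

theorem heatMode_pos (n : ℕ) (τ : ℝ) : 0 < heatMode n τ := Real.exp_pos _

theorem heatMode_antitone (n : ℕ) : Antitone (heatMode n) := fun δ τ h => by
  refine Real.exp_le_exp.2 ?_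
  nlinarith [sq_nonneg (heatFreq n)]

@[fun_prop]
theorem continuous_heatMode (n : ℕ) : Continuous (heatMode n) := by unfold heatMode; fun_prop

theorem hasDerivAt_heatMode (n : ℕ) (τ : ℝ) :
    HasDerivAt (heatMode n) (heatMode n τ * -(heatFreq n) ^ 2) τ := by
  unfold heatMode
  simpa using ((hasDerivAt_id τ).const_mul (-(heatFreq n) ^ 2)).exp

theorem exp_mul_exp_mul_heatMode_le (n : ℕ) {δ : ℝ} (hδ : 0 < δ) :
    Real.exp (heatFreq n) * Real.exp (heatFreq n) * heatMode n δ
      ≤ Real.exp (9 / (4 * δ)) * Real.exp (-n) := by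
  rw [heatMode, ← Real.exp_add, ← Real.exp_add, ← Real.exp_add]
  refine Real.exp_le_exp.2 ?_
  have hsq : 9 / (4 * δ) - 3 * heatFreq n + heatFreq n ^ 2 * δ =
      (3 - 2 * δ * heatFreq n) ^ 2 / (4 * δ) := by
    field_simp; ring
  have : 0 ≤ (3 - 2 * δ * heatFreq n) ^ 2 / (4 * δ) := by positivity
  linarith [add_one_le_heatFreq n]

theorem summable_heatFreq_pow_mul_exp_mul_heatMode (j : ℕ) {δ : ℝ} (hδ : 0 < δ) :
    Summable fun n : ℕ => heatFreq n ^ j * heatMode n δ * Real.exp (heatFreq n) := by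
  have hpos := fun n => (heatMode_pos n δ).le
  have hk := fun n => (heatFreq_pos n).le
  refine Summable.of_nonneg_of_le
    (fun n => mul_nonneg (mul_nonneg (pow_nonneg (hk n) _) (hpos n)) (Real.exp_pos _).le)
    (fun n => ?_) (Real.summable_exp_neg_nat.mul_left (j.factorial * Real.exp (9 / (4 * δ))))
  have hpow : heatFreq n ^ j ≤ j.factorial * Real.exp (heatFreq n) := by
    have := Real.pow_div_factorial_le_exp (heatFreq n) (hk n) j
    rw [div_le_iff₀ (by positivity)] at this
    linarith
  calc heatFreq n ^ j * heatMode n δ * Real.exp (heatFreq n)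
      ≤ (j.factorial * Real.exp (heatFreq n)) * heatMode n δ * Real.exp (heatFreq n) := by
        have := hpos n
        gcongr
    _ = j.factorial * (Real.exp (heatFreq n) * Real.exp (heatFreq n) * heatMode n δ) := by ring
    _ ≤ j.factorial * (Real.exp (9 / (4 * δ)) * Real.exp (-n)) :=
        mul_le_mul_of_nonneg_left (exp_mul_exp_mul_heatMode_le n hδ) (Nat.cast_nonneg _)
    _ = _ := by ring

theorem summable_heatFreq_pow_mul_heatMode (j : ℕ) {δ : ℝ} (hδ : 0 < δ) :
    Summable fun n : ℕ => heatFreq n ^ j * heatMode n δ := by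
  have hnonneg : ∀ n, 0 ≤ heatFreq n ^ j * heatMode n δ := fun n =>
    mul_nonneg (pow_nonneg (heatFreq_pos n).le _) (heatMode_pos n δ).le
  exact .of_nonneg_of_le hnonneg
    (fun n => le_mul_of_one_le_right (hnonneg n) (Real.one_le_exp (heatFreq_pos n).le))
    (summable_heatFreq_pow_mul_exp_mul_heatMode j hδ)

theorem summable_heatFreq_mul_heatMode {δ : ℝ} (hδ : 0 < δ) :
    Summable fun n : ℕ => heatFreq n * heatMode n δ := by
  simpa using summable_heatFreq_pow_mul_heatMode 1 hδ

section TermBounds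
variable (n : ℕ) (z : ℝ) {δ τ : ℝ}

theorem norm_circleHeat_term_le (h : δ ≤ τ) :
    ‖heatMode n τ * Real.cos (heatFreq n * z) / 2‖ ≤ heatFreq n * heatMode n δ := by
  rw [norm_div, norm_mul, Real.norm_of_nonneg (heatMode_pos n τ).le, Real.norm_eq_abs,
    Real.norm_two]
  nlinarith [Real.abs_cos_le_one (heatFreq n * z), abs_nonneg (Real.cos (heatFreq n * z)),
    heatMode_antitone n h, one_le_heatFreq n, heatMode_pos n τ]

theorem norm_circleHeatDeriv_term_le (h : δ ≤ τ) :
    ‖-(heatFreq n * heatMode n τ * Real.sin (heatFreq n * z) / 2)‖ ≤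
      heatFreq n * heatMode n δ := by
  have hk := heatFreq_pos n
  have hmono : heatFreq n * heatMode n τ ≤ heatFreq n * heatMode n δ := by
    gcongr
    exact heatMode_antitone n h
  have hnonneg : 0 ≤ heatFreq n * heatMode n τ := mul_nonneg hk.le (heatMode_pos n τ).le
  rw [norm_neg, norm_div, norm_mul, Real.norm_of_nonneg hnonneg, Real.norm_eq_abs, Real.norm_two]
  nlinarith [Real.abs_sin_le_one (heatFreq n * z), abs_nonneg (Real.sin (heatFreq n * z))]

theorem norm_circleHeatPrim_term_le (h : δ ≤ τ) :
    ‖heatMode n τ * Real.sin (heatFreq n * z) / (2 * heatFreq n)‖ ≤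
      heatFreq n * heatMode n δ := by
  have hk := one_le_heatFreq n
  rw [norm_div, norm_mul, Real.norm_of_nonneg (heatMode_pos n τ).le, Real.norm_eq_abs,
    Real.norm_of_nonneg (by linarith : 0 ≤ 2 * heatFreq n), div_le_iff₀ (by linarith)]
  calc heatMode n τ * |Real.sin (heatFreq n * z)| ≤ heatMode n τ * 1 :=
        mul_le_mul_of_nonneg_left (Real.abs_sin_le_one _) (heatMode_pos n τ).le
    _ ≤ heatMode n δ * (2 * (heatFreq n * heatFreq n)) := by
        have := (heatMode_pos n δ).le
        gcongr
        · exact heatMode_antitone n h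
        · nlinarith
    _ = _ := by ring

end TermBounds

theorem continuousOn_tsum_of_le_heatMode {F : ℕ → ℝ → ℝ → ℝ}
    (hF : ∀ n, Continuous fun w : ℝ × ℝ => F n w.1 w.2)
    (hb : ∀ n z (δ τ : ℝ), δ ≤ τ → ‖F n z τ‖ ≤ heatFreq n * heatMode n δ) :
    ContinuousOn (fun w : ℝ × ℝ => ∑' n, F n w.1 w.2) {w | 0 < w.2} := by
  intro w (hw : 0 < w.2)
  have hcont : ContinuousOn (fun w : ℝ × ℝ => ∑' n, F n w.1 w.2) {v | w.2 / 2 < v.2} :=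
    continuousOn_tsum (fun n => (hF n).continuousOn) (summable_heatFreq_mul_heatMode (half_pos hw))
      fun n v hv => hb n _ _ _ (le_of_lt hv)
  exact (hcont.continuousAt
    ((isOpen_lt continuous_const continuous_snd).mem_nhds (half_lt_self hw))).continuousWithinAt

theorem continuousOn_circleHeat :
    ContinuousOn (fun w : ℝ × ℝ => circleHeat w.1 w.2) {w | 0 < w.2} :=
  continuousOn_const.add (continuousOn_tsum_of_le_heatMode
    (F := fun n z τ => heatMode n τ * Real.cos (heatFreq n * z) / 2)
    (fun n => by fun_prop) fun n z _ _ h => norm_circleHeat_term_le n z h)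

theorem continuousOn_circleHeatDeriv :
    ContinuousOn (fun w : ℝ × ℝ => circleHeatDeriv w.1 w.2) {w | 0 < w.2} :=
  continuousOn_tsum_of_le_heatMode
    (F := fun n z τ => -(heatFreq n * heatMode n τ * Real.sin (heatFreq n * z) / 2))
    (fun n => by fun_prop) fun n z _ _ h => norm_circleHeatDeriv_term_le n z h

theorem continuousOn_circleHeatPrim :
    ContinuousOn (fun w : ℝ × ℝ => circleHeatPrim w.1 w.2) {w | 0 < w.2} :=
  (continuous_fst.div_const 4).continuousOn.add (continuousOn_tsum_of_le_heatMode
    (F := fun n z τ => heatMode n τ * Real.sin (heatFreq n * z) / (2 * heatFreq n))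
    (fun n => by fun_prop) fun n z _ _ h => norm_circleHeatPrim_term_le n z h)

section Derivatives
variable (z : ℝ) {τ : ℝ}

theorem hasDerivAt_circleHeat (hτ : 0 < τ) :
    HasDerivAt (fun z => circleHeat z τ) (circleHeatDeriv z τ) z := by
  refine .const_add _ (hasDerivAt_tsum (summable_heatFreq_mul_heatMode hτ) (fun n y => ?_)
    (fun n y => norm_circleHeatDeriv_term_le n y le_rfl) (y₀ := 0)
    (.of_norm_bounded (summable_heatFreq_mul_heatMode hτ)
      fun n => norm_circleHeat_term_le n 0 le_rfl) z)
  refine (((((hasDerivAt_id y).const_mul (heatFreq n)).cos).const_mul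
    (heatMode n τ)).div_const 2).congr_deriv ?_
  simp only [id, mul_one]
  ring

theorem hasDerivAt_circleHeatPrim (hτ : 0 < τ) :
    HasDerivAt (fun z => circleHeatPrim z τ) (circleHeat z τ) z := by
  refine ((hasDerivAt_id z).div_const 4).add
    (hasDerivAt_tsum (summable_heatFreq_mul_heatMode hτ) (fun n y => ?_)
    (fun n y => norm_circleHeat_term_le n y le_rfl) (y₀ := 0)
    (.of_norm_bounded (summable_heatFreq_mul_heatMode hτ)
      fun n => norm_circleHeatPrim_term_le n 0 le_rfl) z)
  refine (((((hasDerivAt_id y).const_mul (heatFreq n)).sin).const_mul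
    (heatMode n τ)).div_const (2 * heatFreq n)).congr_deriv ?_
  have := (heatFreq_pos n).ne'
  simp only [id, mul_one]
  field_simp

theorem hasDerivAt_circleHeatPrim_time (hτ : 0 < τ) :
    HasDerivAt (fun τ => circleHeatPrim z τ) (circleHeatDeriv z τ) τ := by
  refine .const_add _ (hasDerivAt_tsum_of_isPreconnected (t := Ioi (τ / 2))
    (summable_heatFreq_mul_heatMode (half_pos hτ)) isOpen_Ioi isPreconnected_Ioi
    (fun n σ _ => ?_) (fun n σ hσ => norm_circleHeatDeriv_term_le n z (le_of_lt hσ))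
    (y₀ := τ) (half_lt_self hτ) (.of_norm_bounded (summable_heatFreq_mul_heatMode hτ)
      fun n => norm_circleHeatPrim_term_le n z le_rfl) (half_lt_self hτ))
  refine (((hasDerivAt_heatMode n σ).mul_const (Real.sin (heatFreq n * z))).div_const
    (2 * heatFreq n)).congr_deriv ?_
  have := (heatFreq_pos n).ne'
  field_simp

end Derivatives

section Symmetries
variable (z τ : ℝ)

theorem circleHeat_neg : circleHeat (-z) τ = circleHeat z τ := by simp [circleHeat]

theorem circleHeatDeriv_neg : circleHeatDeriv (-z) τ = -circleHeatDeriv z τ := by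
  simp [circleHeatDeriv, ← tsum_neg, neg_div]

theorem circleHeatPrim_neg : circleHeatPrim (-z) τ = -circleHeatPrim z τ := by
  simp [circleHeatPrim, neg_div, tsum_neg, add_comm]

theorem circleHeat_add_four : circleHeat (z + 4) τ = circleHeat z τ := by
  simp_rw [circleHeat, heatFreq_mul_add_four, Real.cos_add_nat_mul_two_pi]

theorem circleHeatPrim_add_four : circleHeatPrim (z + 4) τ = circleHeatPrim z τ + 1 := by
  simp_rw [circleHeatPrim, heatFreq_mul_add_four, Real.sin_add_nat_mul_two_pi]
  ring

theorem circleHeatPrim_two : circleHeatPrim 2 τ = 1 / 2 := by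
  have hsin : ∀ n : ℕ, Real.sin (heatFreq n * 2) = 0 := fun n => by
    rw [show heatFreq n * 2 = (n + 1 : ℕ) * Real.pi by unfold heatFreq; push_cast; ring,
      Real.sin_nat_mul_pi]
  norm_num [circleHeatPrim, hsin]

end Symmetries

/-! ### Image side of the `4`-periodic heat kernel -/

theorem heatK_nonneg (z τ : ℝ) : 0 ≤ heatK z τ := by unfold heatK; positivity

theorem heatK_neg (z τ : ℝ) : heatK (-z) τ = heatK z τ := by simp [heatK]

theorem heatMode_eq_exp_neg_pi_mul (n : ℕ) (τ : ℝ) :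
    heatMode n τ = Real.exp (-Real.pi * ((n : ℝ) + 1) ^ 2 * (1 / (4 / (Real.pi * τ)))) := by
  unfold heatMode heatFreq; congr 1; rw [one_div_div]; ring

section Poisson
variable (z : ℝ) {τ : ℝ}

theorem inv_sqrt_mul_one_div_rpow_half (hτ : 0 < τ) :
    (Real.sqrt (4 * Real.pi * τ))⁻¹ * (1 / (4 / (Real.pi * τ)) ^ (1 / 2 : ℝ)) = 1 / 4 := by
  have := Real.pi_pos
  rw [← Real.sqrt_eq_rpow, one_div, ← mul_inv, ← Real.sqrt_mul (by positivity),
    show 4 * Real.pi * τ * (4 / (Real.pi * τ)) = 4 ^ 2 by field_simp, Real.sqrt_sq (by norm_num),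
    one_div]

theorem circleHeat_eq_cosKernel (hτ : 0 < τ) :
    circleHeat z τ =
      1 / 4 * HurwitzZeta.cosKernel ((z / 4 : ℝ) : UnitAddCircle) (1 / (4 / (Real.pi * τ))) := by
  have hX : 0 < 1 / (4 / (Real.pi * τ)) := by have := Real.pi_pos; positivity
  have hseries : ∑' n : ℕ, heatMode n τ * Real.cos (heatFreq n * z) / 2 =
      1 / 4 *
        (HurwitzZeta.cosKernel ((z / 4 : ℝ) : UnitAddCircle) (1 / (4 / (Real.pi * τ))) - 1) := by
    rw [← (HurwitzZeta.hasSum_nat_cosKernel₀ (z / 4) hX).tsum_eq, ← tsum_mul_left]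
    refine tsum_congr fun n => ?_
    rw [heatMode_eq_exp_neg_pi_mul,
      show heatFreq n * z = 2 * Real.pi * (z / 4) * (n + 1) by unfold heatFreq; ring]
    ring
  rw [circleHeat, hseries]
  ring

theorem circleHeatDeriv_eq_sinKernel (hτ : 0 < τ) :
    circleHeatDeriv z τ = -(Real.pi / 8) *
      HurwitzZeta.sinKernel ((z / 4 : ℝ) : UnitAddCircle) (1 / (4 / (Real.pi * τ))) := by
  have hX : 0 < 1 / (4 / (Real.pi * τ)) := by have := Real.pi_pos; positivity
  have hseries := HurwitzZeta.hasSum_nat_sinKernel (z / 4) hX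
  rw [← hasSum_nat_add_iff' 1] at hseries
  simp only [Finset.sum_range_one, Nat.cast_zero, mul_zero, zero_mul, sub_zero] at hseries
  rw [circleHeatDeriv, ← hseries.tsum_eq, ← tsum_mul_left]
  refine tsum_congr fun n => ?_
  rw [heatMode_eq_exp_neg_pi_mul,
    show heatFreq n * z = 2 * Real.pi * (z / 4) * (n + 1) by unfold heatFreq; ring, heatFreq]
  push_cast
  ring

theorem hasSum_heatK (hτ : 0 < τ) :
    HasSum (fun m : ℤ => heatK (z + 4 * m) τ) (circleHeat z τ) := by
  have hX : 0 < 4 / (Real.pi * τ) := by have := Real.pi_pos; positivity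
  have hsum := (HurwitzZeta.hasSum_int_evenKernel (z / 4) hX).mul_left
    (Real.sqrt (4 * Real.pi * τ))⁻¹
  rw [HurwitzZeta.evenKernel_functional_equation, ← mul_assoc, inv_sqrt_mul_one_div_rpow_half hτ,
    ← circleHeat_eq_cosKernel z hτ] at hsum
  refine hsum.congr_fun fun m => ?_
  unfold heatK
  congr 2
  field_simp
  ring

theorem hasSum_heatK_deriv (hτ : 0 < τ) :
    HasSum (fun m : ℤ => -((z + 4 * m) / (2 * τ)) * heatK (z + 4 * m) τ)
      (circleHeatDeriv z τ) := by
  have hX : 0 < 4 / (Real.pi * τ) := by have := Real.pi_pos; positivity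
  have hX3 : 1 / (4 / (Real.pi * τ)) ^ (3 / 2 : ℝ) =
      (Real.pi * τ / 4) * (1 / (4 / (Real.pi * τ)) ^ (1 / 2 : ℝ)) := by
    rw [show (3 / 2 : ℝ) = 1 + 1 / 2 by norm_num, Real.rpow_add hX, Real.rpow_one,
      ← one_div_mul_one_div, one_div_div]
  have hsum := (HurwitzZeta.hasSum_int_oddKernel (z / 4) hX).mul_left
    (-(2 / τ) * (Real.sqrt (4 * Real.pi * τ))⁻¹)
  have hval : -(2 / τ) * (Real.sqrt (4 * Real.pi * τ))⁻¹ *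
      HurwitzZeta.oddKernel ((z / 4 : ℝ) : UnitAddCircle) (4 / (Real.pi * τ)) =
        circleHeatDeriv z τ := by
    rw [HurwitzZeta.oddKernel_functional_equation, hX3, circleHeatDeriv_eq_sinKernel z hτ]
    linear_combination (exp := 1) -(2 / τ) * (Real.pi * τ / 4) *
      HurwitzZeta.sinKernel ((z / 4 : ℝ) : UnitAddCircle) (1 / (4 / (Real.pi * τ))) *
        inv_sqrt_mul_one_div_rpow_half hτ - (Real.pi / 8) *
      HurwitzZeta.sinKernel ((z / 4 : ℝ) : UnitAddCircle) (1 / (4 / (Real.pi * τ))) *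
        mul_inv_cancel₀ hτ.ne'
  rw [hval] at hsum
  refine hsum.congr_fun fun m => ?_
  rw [heatK, show -((z + 4 * (m : ℝ)) ^ 2) / (4 * τ) =
    -Real.pi * (m + z / 4) ^ 2 * (4 / (Real.pi * τ)) by field_simp; ring]
  field_simp
  ring

theorem circleHeat_nonneg (hτ : 0 < τ) : 0 ≤ circleHeat z τ :=
  (hasSum_heatK z hτ).nonneg fun _ => heatK_nonneg _ _

end Poisson

theorem hasSum_int_of_even_of_odd {g : ℤ → ℝ} {A B : ℝ} (heven : HasSum (fun m : ℤ => g (2 * m)) A)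
    (hodd : HasSum (fun m : ℤ => g (2 * m + 1)) B) : HasSum g (A + B) := by
  have ieven : Function.Injective fun m : ℤ => 2 * m := fun a b h => by simpa using h
  have iodd : Function.Injective fun m : ℤ => 2 * m + 1 := fun a b h => by simpa using h
  refine HasSum.add_isCompl (isCompl_iff.2 ⟨?_, ?_⟩) ((ieven.hasSum_range_iff (f := g)).2 heven)
    ((iodd.hasSum_range_iff (f := g)).2 hodd)
  · rw [Set.disjoint_iff_inter_eq_empty]
    ext k
    simp only [mem_inter_iff, mem_range, mem_empty_iff_false, iff_false]
    omega
  · rw [codisjoint_iff]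
    ext k
    simp only [sup_eq_union, mem_union, mem_range, top_eq_univ, mem_univ, iff_true]
    obtain ⟨c, h | h⟩ := Int.even_or_odd' k
    · exact Or.inl ⟨c, h.symm⟩
    · exact Or.inr ⟨c, h.symm⟩

theorem heatGamma_eq_circleHeat (x y : ℝ) {τ : ℝ} (hτ : 0 < τ) :
    heatGamma x y τ = circleHeat (x - y) τ + circleHeat (x + y + 2) τ := by
  have hdirect := hasSum_heatK (-(x - y)) hτ
  have hreflected := hasSum_heatK (-(x + y + 2)) hτ
  rw [circleHeat_neg] at hdirect hreflected
  refine HasSum.tsum_eq (hasSum_int_of_even_of_odd ?_ ?_)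
  · refine hdirect.congr_fun fun m => ?_
    rw [Even.neg_one_pow (by simp), ← heatK_neg]
    congr 1; push_cast; ring
  · refine ((Equiv.addRight (1 : ℤ)).hasSum_iff.2 hreflected).congr_fun fun m => ?_
    rw [Odd.neg_one_pow (Int.natAbs_odd.2 (odd_two_mul_add_one m)), ← heatK_neg]
    simp only [Function.comp, Equiv.coe_addRight]
    congr 1; push_cast; ring

section SmallTime

theorem heatK_le {z τ : ℝ} (hz : z ≠ 0) (hτ : 0 < τ) (hτ1 : τ ≤ 1) :
    heatK z τ ≤ 384 * τ ^ 2 * (1 / |z|) ^ 6 := by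
  have : 0 < z ^ 2 := by positivity
  have hexp : Real.exp (-(z ^ 2) / (4 * τ)) ≤ 384 * τ ^ 3 / z ^ 6 := by
    have := Real.pow_div_factorial_le_exp (z ^ 2 / (4 * τ)) (by positivity) 3
    rw [neg_div, Real.exp_neg, inv_le_comm₀ (Real.exp_pos _) (by positivity)]
    refine le_trans (le_of_eq ?_) this
    simp only [Nat.factorial]
    field_simp
    norm_num
  have hsqrt : (Real.sqrt (4 * Real.pi * τ))⁻¹ ≤ τ⁻¹ := by
    refine inv_anti₀ hτ (Real.le_sqrt_of_sq_le ?_)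
    nlinarith [Real.pi_gt_three]
  calc heatK z τ ≤ τ⁻¹ * (384 * τ ^ 3 / z ^ 6) := by unfold heatK; gcongr
    _ = _ := by rw [one_div, inv_pow, Even.pow_abs (by decide)]; field_simp

theorem heatK_le_of_le_abs {z τ c N : ℝ} (hc : 1 ≤ c) (hN : 1 ≤ N) (hz : N / c ≤ |z|) (hτ : 0 < τ)
    (hτ1 : τ ≤ 1) :
    heatK z τ ≤ 384 * c ^ 6 * τ * (1 / N ^ 2) ∧
      |z| / (2 * τ) * heatK z τ ≤ 384 * c ^ 6 * τ * (1 / N ^ 2) := by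
  have hz0 : 0 < |z| := lt_of_lt_of_le (by positivity) hz
  have hzne : z ≠ 0 := abs_pos.1 hz0
  have hK := heatK_le hzne hτ hτ1
  set q := 1 / |z|
  have hq : q ≤ c / N := (one_div_le_one_div_of_le (by positivity) hz).trans_eq (one_div_div _ _)
  have : 0 ≤ q := by positivity
  have hpow : ∀ k ≤ 4, q ^ (k + 2) ≤ c ^ 6 * (1 / N ^ 2) := fun k hk => by
    calc q ^ (k + 2) = q ^ k * q ^ 2 := pow_add q k 2
      _ ≤ c ^ k * (c / N) ^ 2 := by
        gcongr
        exact hq.trans (div_le_self (by linarith) hN)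
      _ ≤ c ^ 4 * (c / N) ^ 2 := by gcongr
      _ = _ := by ring
  constructor
  · calc heatK z τ ≤ 384 * τ ^ 2 * q ^ 6 := hK
      _ ≤ 384 * τ * (c ^ 6 * (1 / N ^ 2)) := by
        gcongr
        · nlinarith
        · exact hpow 4 le_rfl
      _ = _ := by ring
  · calc |z| / (2 * τ) * heatK z τ ≤ |z| / (2 * τ) * (384 * τ ^ 2 * q ^ 6) := by gcongr
      _ = 192 * τ * q ^ 5 := by simp only [q]; field_simp; norm_num
      _ ≤ 384 * τ * (c ^ 6 * (1 / N ^ 2)) := by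
        gcongr
        · norm_num
        · exact hpow 3 (by norm_num)
      _ = _ := by ring

theorem summable_one_div_abs_int_add_one_sq :
    Summable fun m : ℤ => 1 / (|(m : ℝ)| + 1) ^ 2 := by
  have h : Summable fun n : ℕ => 1 / ((n : ℝ) + 1) ^ 2 := by
    simpa using (summable_nat_add_iff 1).2 (Real.summable_one_div_nat_pow.2 one_lt_two)
  exact Summable.of_nat_of_neg (by simpa using h) (by simpa using h)

theorem le_abs_add_four_mul_int {ρ z : ℝ} (hρ : 0 ≤ ρ) (hz : z ∈ Icc ρ (4 - ρ)) (m : ℤ) :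
    (|(m : ℝ)| + 1) / (2 / ρ) ≤ |z + 4 * m| := by
  obtain ⟨h1, h2⟩ := hz
  rw [div_div_eq_mul_div]
  rcases le_or_gt 0 m with hm | hm
  · have : (0 : ℝ) ≤ m := by exact_mod_cast hm
    rw [abs_of_nonneg this]
    refine le_trans ?_ (le_abs_self _)
    nlinarith
  · have : (m : ℝ) ≤ -1 := by exact_mod_cast (by omega : m ≤ -1)
    rw [abs_of_neg (by linarith)]
    refine le_trans ?_ (neg_le_abs _)
    nlinarith

theorem exists_circleHeat_le_mul_time {ρ : ℝ} (hρ : 0 < ρ) : ∃ C, 0 ≤ C ∧ ∀ z ∈ Icc ρ (4 - ρ),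
    ∀ τ, 0 < τ → τ ≤ 1 → |circleHeat z τ| ≤ C * τ ∧ |circleHeatDeriv z τ| ≤ C * τ := by
  refine ⟨384 * (2 / ρ) ^ 6 * ∑' m : ℤ, 1 / (|(m : ℝ)| + 1) ^ 2,
    mul_nonneg (by positivity) (tsum_nonneg fun m => by positivity), fun z hz τ hτ hτ1 => ?_⟩
  have hρ2 : 1 ≤ 2 / ρ := by
    rw [one_le_div hρ]
    linarith [hz.1.trans hz.2]
  have hterm := fun m : ℤ => heatK_le_of_le_abs hρ2 (N := |(m : ℝ)| + 1)
    (by linarith [abs_nonneg (m : ℝ)]) (le_abs_add_four_mul_int hρ.le hz m) hτ hτ1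
  have hsum := summable_one_div_abs_int_add_one_sq.hasSum.mul_left (384 * (2 / ρ) ^ 6 * τ)
  rw [mul_right_comm]
  constructor
  · rw [abs_of_nonneg (circleHeat_nonneg z hτ)]
    exact hasSum_le (fun m => (hterm m).1) (hasSum_heatK z hτ) hsum
  · rw [← (hasSum_heatK_deriv z hτ).tsum_eq, ← Real.norm_eq_abs]
    refine tsum_of_norm_bounded hsum fun m => ?_
    rw [norm_mul, norm_neg, norm_div, Real.norm_of_nonneg (by positivity : 0 ≤ 2 * τ),
      Real.norm_of_nonneg (heatK_nonneg _ _), Real.norm_eq_abs]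
    exact (hterm m).2

end SmallTime

/-! ### The Neumann heat kernel and its primitive -/

/-- The extension by zero to nonpositive times of a function of space and time. It makes time
integrals over `(0, t)` independent of `t`. -/
noncomputable def causal (F : ℝ → ℝ → ℝ) (z τ : ℝ) : ℝ := if 0 < τ then F z τ else 0

/-- The Neumann heat kernel of `[-1, 1]`, extended by zero to nonpositive times. -/
noncomputable def neumannHeat (x y τ : ℝ) : ℝ :=
  causal circleHeat (x - y) τ + causal circleHeat (x + y + 2) τ

/-- The space derivative of `neumannHeat`. -/
noncomputable def neumannHeatDeriv (x y τ : ℝ) : ℝ :=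
  causal circleHeatDeriv (x - y) τ + causal circleHeatDeriv (x + y + 2) τ

/-- The heat contained in `[-1, x]` at time `τ` after the release of a unit point mass at `y`.
At nonpositive times the mass still sits at `y`. -/
noncomputable def neumannPrim (x y τ : ℝ) : ℝ :=
  causal circleHeatPrim (x - y) τ + causal circleHeatPrim (x + y + 2) τ +
    if τ ≤ 0 ∧ y < x then 1 else 0

/-- The points `(x, y, τ)` away from the singularity of the Neumann heat kernel. -/
def heatDomain : Set (ℝ × ℝ × ℝ) :=
  {w | w.1 ∈ Ioo (-1) 1 ∧ w.2.1 ∈ Icc (-1) 1 ∧ (0 < w.2.2 ∨ w.1 ≠ w.2.1)}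

section Causal
variable {F : ℝ → ℝ → ℝ} {z τ : ℝ}

theorem causal_of_pos (hτ : 0 < τ) : causal F z τ = F z τ := if_pos hτ

theorem causal_of_nonpos (hτ : τ ≤ 0) : causal F z τ = 0 := if_neg hτ.not_gt

theorem measurable_causal (hF : ContinuousOn (fun w : ℝ × ℝ => F w.1 w.2) {w | 0 < w.2}) :
    Measurable fun w : ℝ × ℝ => causal F w.1 w.2 := by
  classical
  exact hF.measurable_piecewise (continuousOn_const (c := 0))
    (measurableSet_lt measurable_const measurable_snd)

theorem continuousAt_causal_of_small {z : ℝ} (hz : 0 < |z|) (hz4 : |z| < 4)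
    (hsmall : ∀ ρ > 0, ∃ C, 0 ≤ C ∧ ∀ ζ, ρ ≤ |ζ| → |ζ| ≤ 4 - ρ → ∀ τ, 0 < τ → τ ≤ 1 →
      |F ζ τ| ≤ C * τ) :
    ContinuousAt (fun w : ℝ × ℝ => causal F w.1 w.2) (z, 0) := by
  obtain ⟨ρ, hρ, hρz⟩ := exists_between (lt_min hz (sub_pos.2 hz4))
  obtain ⟨hρ₁, hρ₂⟩ := lt_min_iff.1 hρz
  obtain ⟨C, hC, hbound⟩ := hsmall ρ hρ
  have hfst : Tendsto (fun w : ℝ × ℝ => |w.1|) (𝓝 (z, 0)) (𝓝 |z|) :=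
    continuous_fst.abs.continuousAt
  have hsnd : Tendsto (fun w : ℝ × ℝ => w.2) (𝓝 (z, 0)) (𝓝 0) := continuous_snd.continuousAt
  rw [ContinuousAt, causal_of_nonpos le_rfl]
  refine squeeze_zero_norm' (a := fun w : ℝ × ℝ => C * |w.2|) ?_
    (by simpa using hsnd.abs.const_mul C)
  filter_upwards [hfst.eventually (lt_mem_nhds hρ₁),
    hfst.eventually (gt_mem_nhds (by linarith : |z| < 4 - ρ)),
    hsnd.eventually (gt_mem_nhds one_pos)] with w h₁ h₂ h₃
  rcases le_or_gt w.2 0 with h | h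
  · simpa [causal_of_nonpos h] using mul_nonneg hC (abs_nonneg _)
  · simpa [causal_of_pos h, abs_of_pos h] using hbound w.1 h₁.le h₂.le w.2 h h₃.le

theorem continuousOn_causal (hF : ContinuousOn (fun w : ℝ × ℝ => F w.1 w.2) {w | 0 < w.2})
    (hsmall : ∀ ρ > 0, ∃ C, 0 ≤ C ∧ ∀ ζ, ρ ≤ |ζ| → |ζ| ≤ 4 - ρ → ∀ τ, 0 < τ → τ ≤ 1 →
      |F ζ τ| ≤ C * τ) :
    ContinuousOn (fun w : ℝ × ℝ => causal F w.1 w.2) {w | 0 < w.2 ∨ 0 < |w.1| ∧ |w.1| < 4} := by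
  rintro ⟨z, τ⟩ hw
  refine ContinuousAt.continuousWithinAt ?_
  rcases lt_trichotomy τ 0 with h | rfl | h
  · refine (continuousAt_const (y := (0 : ℝ))).congr ?_
    filter_upwards [(isOpen_lt continuous_snd continuous_const).mem_nhds h] with w hw'
    exact (causal_of_nonpos (le_of_lt hw')).symm
  · obtain ⟨h₁, h₂⟩ := hw.resolve_left (lt_irrefl _)
    exact continuousAt_causal_of_small h₁ h₂ hsmall
  · have hopen : {w : ℝ × ℝ | 0 < w.2} ∈ 𝓝 (z, τ) :=
      (isOpen_lt continuous_const continuous_snd).mem_nhds h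
    refine (hF.continuousAt hopen).congr ?_
    filter_upwards [hopen] with w hw'
    exact (causal_of_pos hw').symm

end Causal

theorem circleHeat_abs (z τ : ℝ) : circleHeat |z| τ = circleHeat z τ := by
  rcases abs_choice z with h | h <;> simp [h, circleHeat_neg]

theorem abs_circleHeatDeriv_abs (z τ : ℝ) :
    |circleHeatDeriv |z| τ| = |circleHeatDeriv z τ| := by
  rcases abs_choice z with h | h <;> simp [h, circleHeatDeriv_neg]

theorem continuousOn_causal_circleHeat :
    ContinuousOn (fun w : ℝ × ℝ => causal circleHeat w.1 w.2)
      {w | 0 < w.2 ∨ 0 < |w.1| ∧ |w.1| < 4} := by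
  refine continuousOn_causal continuousOn_circleHeat fun ρ hρ => ?_
  obtain ⟨C, hC, h⟩ := exists_circleHeat_le_mul_time hρ
  exact ⟨C, hC, fun z h₁ h₂ τ h₃ h₄ => by simpa [circleHeat_abs] using (h |z| ⟨h₁, h₂⟩ τ h₃ h₄).1⟩

theorem continuousOn_causal_circleHeatDeriv :
    ContinuousOn (fun w : ℝ × ℝ => causal circleHeatDeriv w.1 w.2)
      {w | 0 < w.2 ∨ 0 < |w.1| ∧ |w.1| < 4} := by
  refine continuousOn_causal continuousOn_circleHeatDeriv fun ρ hρ => ?_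
  obtain ⟨C, hC, h⟩ := exists_circleHeat_le_mul_time hρ
  exact ⟨C, hC, fun z h₁ h₂ τ h₃ h₄ => by
    simpa [abs_circleHeatDeriv_abs] using (h |z| ⟨h₁, h₂⟩ τ h₃ h₄).2⟩

theorem tendsto_circleHeatPrim {z : ℝ} (hz : z ∈ Ioo 0 4) :
    Tendsto (circleHeatPrim z) (𝓝[>] 0) (𝓝 (1 / 2)) := by
  obtain ⟨ρ, hρ, hρz⟩ := exists_between (lt_min hz.1 (lt_min (sub_pos.2 hz.2) two_pos))
  obtain ⟨hρ₁, hρ₂, hρ₃⟩ := by simpa only [lt_min_iff] using hρz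
  obtain ⟨C, -, h⟩ := exists_circleHeat_le_mul_time hρ
  have hlim : Tendsto (fun τ : ℝ => C * τ * ‖z - 2‖) (𝓝[>] 0) (𝓝 0) := by
    have hcont : Continuous fun τ : ℝ => C * τ * ‖z - 2‖ := by fun_prop
    simpa using (hcont.tendsto 0).mono_left nhdsWithin_le_nhds
  refine tendsto_iff_norm_sub_tendsto_zero.2 (squeeze_zero' (.of_forall fun _ => norm_nonneg _)
    ?_ hlim)
  filter_upwards [self_mem_nhdsWithin, Ioo_mem_nhdsGT one_pos] with τ (hτ : 0 < τ) hτ₁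
  rw [← circleHeatPrim_two (τ := τ)]
  exact (convex_Icc ρ (4 - ρ)).norm_image_sub_le_of_norm_hasDerivWithin_le
    (f := fun z => circleHeatPrim z τ)
    (fun x _ => (hasDerivAt_circleHeatPrim x hτ).hasDerivWithinAt)
    (fun x hx => (h x hx τ hτ hτ₁.2.le).1) ⟨hρ₃.le, by linarith⟩ ⟨hρ₁.le, by linarith⟩

section NeumannKernel
variable {x y τ : ℝ}

theorem neumannHeat_of_pos (hτ : 0 < τ) :
    neumannHeat x y τ = circleHeat (x - y) τ + circleHeat (x + y + 2) τ := by
  simp only [neumannHeat, causal_of_pos hτ]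

theorem neumannHeat_of_nonpos (hτ : τ ≤ 0) : neumannHeat x y τ = 0 := by
  simp only [neumannHeat, causal_of_nonpos hτ, add_zero]

theorem neumannPrim_of_pos (hτ : 0 < τ) :
    neumannPrim x y τ = circleHeatPrim (x - y) τ + circleHeatPrim (x + y + 2) τ := by
  simp [neumannPrim, causal_of_pos hτ, hτ.not_ge]

theorem neumannPrim_of_nonpos (hτ : τ ≤ 0) : neumannPrim x y τ = if y < x then 1 else 0 := by
  simp [neumannPrim, causal_of_nonpos hτ, hτ]

theorem heatGamma_eq_neumannHeat (hτ : 0 < τ) : heatGamma x y τ = neumannHeat x y τ := by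
  rw [heatGamma_eq_circleHeat x y hτ, neumannHeat_of_pos hτ]

theorem neumannHeat_nonneg : 0 ≤ neumannHeat x y τ := by
  rcases le_or_gt τ 0 with h | h
  · exact (neumannHeat_of_nonpos h).ge
  · rw [neumannHeat_of_pos h]
    exact add_nonneg (circleHeat_nonneg _ h) (circleHeat_nonneg _ h)

theorem continuous_neumannHeat (τ : ℝ) : Continuous fun w : ℝ × ℝ => neumannHeat w.1 w.2 τ := by
  rcases le_or_gt τ 0 with h | h
  · simpa only [neumannHeat_of_nonpos h] using continuous_const
  · have hcont : Continuous fun z => circleHeat z τ :=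
      continuous_iff_continuousAt.2 fun z => (hasDerivAt_circleHeat z h).continuousAt
    simp only [neumannHeat_of_pos h]
    fun_prop

theorem continuous_neumannHeat_left (y τ : ℝ) : Continuous fun x => neumannHeat x y τ :=
  (continuous_neumannHeat τ).comp (f := fun x => (x, y)) (by fun_prop)

theorem measurable_neumannHeat :
    Measurable fun w : ℝ × ℝ × ℝ => neumannHeat w.1 w.2.1 w.2.2 := by
  have h := measurable_causal continuousOn_circleHeat
  exact (h.comp (f := fun w : ℝ × ℝ × ℝ => (w.1 - w.2.1, w.2.2)) (by fun_prop)).add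
    (h.comp (f := fun w : ℝ × ℝ × ℝ => (w.1 + w.2.1 + 2, w.2.2)) (by fun_prop))

theorem measurable_neumannHeatDeriv :
    Measurable fun w : ℝ × ℝ × ℝ => neumannHeatDeriv w.1 w.2.1 w.2.2 := by
  have h := measurable_causal continuousOn_circleHeatDeriv
  exact (h.comp (f := fun w : ℝ × ℝ × ℝ => (w.1 - w.2.1, w.2.2)) (by fun_prop)).add
    (h.comp (f := fun w : ℝ × ℝ × ℝ => (w.1 + w.2.1 + 2, w.2.2)) (by fun_prop))

theorem measurable_neumannPrim :
    Measurable fun w : ℝ × ℝ × ℝ => neumannPrim w.1 w.2.1 w.2.2 := by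
  have h := measurable_causal continuousOn_circleHeatPrim
  refine ((h.comp (f := fun w : ℝ × ℝ × ℝ => (w.1 - w.2.1, w.2.2)) (by fun_prop)).add
    (h.comp (f := fun w : ℝ × ℝ × ℝ => (w.1 + w.2.1 + 2, w.2.2)) (by fun_prop))).add
    (.ite (.inter ?_ ?_) measurable_const measurable_const)
  · exact measurableSet_le (f := fun w : ℝ × ℝ × ℝ => w.2.2) (by fun_prop) measurable_const
  · exact measurableSet_lt (f := fun w : ℝ × ℝ × ℝ => w.2.1) (by fun_prop) measurable_fst

theorem continuousOn_heatDomain_of_causal {F : ℝ → ℝ → ℝ}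
    (hF : ContinuousOn (fun w : ℝ × ℝ => causal F w.1 w.2)
      {w | 0 < w.2 ∨ 0 < |w.1| ∧ |w.1| < 4}) :
    ContinuousOn (fun w : ℝ × ℝ × ℝ =>
      causal F (w.1 - w.2.1) w.2.2 + causal F (w.1 + w.2.1 + 2) w.2.2) heatDomain := by
  refine (hF.comp (f := fun w : ℝ × ℝ × ℝ => (w.1 - w.2.1, w.2.2)) (by fun_prop) ?_).add
    (hF.comp (f := fun w : ℝ × ℝ × ℝ => (w.1 + w.2.1 + 2, w.2.2)) (by fun_prop) ?_)
  · rintro ⟨x, y, τ⟩ ⟨hx, hy, hτ | hxy⟩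
    · exact .inl hτ
    · exact .inr ⟨abs_pos.2 (sub_ne_zero.2 hxy),
        abs_lt.2 ⟨by linarith [hx.1, hy.2], by linarith [hx.2, hy.1]⟩⟩
  · rintro ⟨x, y, τ⟩ ⟨hx, hy, -⟩
    have hpos : 0 < x + y + 2 := by linarith [hx.1, hy.1]
    refine .inr ⟨abs_pos.2 hpos.ne', ?_⟩
    rw [abs_of_pos hpos]
    linarith [hx.2, hy.2]

theorem continuousOn_neumannHeat :
    ContinuousOn (fun w : ℝ × ℝ × ℝ => neumannHeat w.1 w.2.1 w.2.2) heatDomain :=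
  continuousOn_heatDomain_of_causal continuousOn_causal_circleHeat

theorem continuousOn_neumannHeatDeriv :
    ContinuousOn (fun w : ℝ × ℝ × ℝ => neumannHeatDeriv w.1 w.2.1 w.2.2) heatDomain :=
  continuousOn_heatDomain_of_causal continuousOn_causal_circleHeatDeriv

theorem hasDerivAt_neumannHeat (x y τ : ℝ) :
    HasDerivAt (fun x => neumannHeat x y τ) (neumannHeatDeriv x y τ) x := by
  rcases le_or_gt τ 0 with h | h
  · simpa only [neumannHeat_of_nonpos h, neumannHeatDeriv, causal_of_nonpos h, add_zero]
      using hasDerivAt_const x (0 : ℝ)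
  · simp only [neumannHeat_of_pos h, neumannHeatDeriv, causal_of_pos h, add_assoc]
    exact ((hasDerivAt_circleHeat (x - y) h).comp_sub_const x y).add
      ((hasDerivAt_circleHeat (x + (y + 2)) h).comp_add_const x (y + 2))

theorem hasDerivAt_neumannPrim (x y : ℝ) (hτ : 0 < τ) :
    HasDerivAt (fun x => neumannPrim x y τ) (neumannHeat x y τ) x := by
  simp only [neumannPrim_of_pos hτ, neumannHeat_of_pos hτ, add_assoc]
  exact ((hasDerivAt_circleHeatPrim (x - y) hτ).comp_sub_const x y).add
    ((hasDerivAt_circleHeatPrim (x + (y + 2)) hτ).comp_add_const x (y + 2))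

theorem hasDerivAt_neumannPrim_time_of_ne (x y : ℝ) (hτ : τ ≠ 0) :
    HasDerivAt (neumannPrim x y) (neumannHeatDeriv x y τ) τ := by
  rcases hτ.lt_or_gt with h | h
  · have hconst : neumannPrim x y =ᶠ[𝓝 τ] fun _ => if y < x then 1 else 0 := by
      filter_upwards [gt_mem_nhds h] with σ hσ using neumannPrim_of_nonpos (le_of_lt hσ)
    simpa only [neumannHeatDeriv, causal_of_nonpos h.le, add_zero]
      using (hasDerivAt_const τ _).congr_of_eventuallyEq hconst
  · have hcircle : neumannPrim x y =ᶠ[𝓝 τ]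
        fun σ => circleHeatPrim (x - y) σ + circleHeatPrim (x + y + 2) σ := by
      filter_upwards [lt_mem_nhds h] with σ hσ using neumannPrim_of_pos hσ
    simpa only [neumannHeatDeriv, causal_of_pos h]
      using ((hasDerivAt_circleHeatPrim_time _ h).add
        (hasDerivAt_circleHeatPrim_time _ h)).congr_of_eventuallyEq hcircle

theorem tendsto_neumannPrim (hx : x ∈ Ioo (-1) 1) (hy : y ∈ Icc (-1) 1) (hxy : x ≠ y) :
    Tendsto (neumannPrim x y) (𝓝[>] 0) (𝓝 (if y < x then 1 else 0)) := by
  obtain ⟨hx₁, hx₂⟩ := hx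
  obtain ⟨hy₁, hy₂⟩ := hy
  have himage : Tendsto (circleHeatPrim (x + y + 2)) (𝓝[>] 0) (𝓝 (1 / 2)) :=
    tendsto_circleHeatPrim ⟨by linarith, by linarith⟩
  have hcircle : (fun τ => circleHeatPrim (x - y) τ + circleHeatPrim (x + y + 2) τ)
      =ᶠ[𝓝[>] 0] neumannPrim x y := by
    filter_upwards [self_mem_nhdsWithin] with τ hτ using (neumannPrim_of_pos hτ).symm
  refine Tendsto.congr' hcircle ?_
  rcases hxy.lt_or_gt with h | h
  · have hdirect : Tendsto (circleHeatPrim (x - y)) (𝓝[>] 0) (𝓝 (-(1 / 2))) := by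
      simpa only [← circleHeatPrim_neg, neg_sub]
        using (tendsto_circleHeatPrim (z := y - x) ⟨by linarith, by linarith⟩).neg
    simpa [h.not_gt] using hdirect.add himage
  · have hdirect : Tendsto (circleHeatPrim (x - y)) (𝓝[>] 0) (𝓝 (1 / 2)) :=
      tendsto_circleHeatPrim ⟨by linarith, by linarith⟩
    have hsum := hdirect.add himage
    norm_num at hsum
    simpa [h] using hsum

theorem hasDerivAt_neumannPrim_time (h : (x, y, τ) ∈ heatDomain) :
    HasDerivAt (neumannPrim x y) (neumannHeatDeriv x y τ) τ := by
  by_cases hτ : τ = 0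
  · subst hτ
    obtain ⟨hx, hy, hxy⟩ := h
    replace hxy : x ≠ y := hxy.resolve_left (lt_irrefl _)
    refine hasDerivAt_of_hasDerivAt_of_ne
      (fun σ hσ => hasDerivAt_neumannPrim_time_of_ne x y hσ) ?_ ?_
    · refine continuousAt_iff_continuous_left'_right'.2 ⟨?_, ?_⟩
      · refine continuousWithinAt_const.congr (fun σ (hσ : σ < 0) => ?_)
          (neumannPrim_of_nonpos le_rfl)
        exact neumannPrim_of_nonpos hσ.le
      · rw [ContinuousWithinAt, neumannPrim_of_nonpos le_rfl]
        exact tendsto_neumannPrim hx hy hxy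
    · exact ((continuousOn_neumannHeatDeriv.comp (f := fun σ : ℝ => (x, y, σ)) (s := univ)
        (by fun_prop) fun σ _ => ⟨hx, hy, .inr hxy⟩).continuousAt univ_mem)
  · exact hasDerivAt_neumannPrim_time_of_ne x y hτ

theorem neumannPrim_neg_one (y : ℝ) (hτ : 0 < τ) : neumannPrim (-1) y τ = 0 := by
  rw [neumannPrim_of_pos hτ, show -1 - y = -(-1 + y + 2) by ring, circleHeatPrim_neg,
    neg_add_cancel]

theorem neumannPrim_one (y : ℝ) (hτ : 0 < τ) : neumannPrim 1 y τ = 1 := by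
  rw [neumannPrim_of_pos hτ, show 1 + y + 2 = -(1 - y) + 4 by ring, circleHeatPrim_add_four,
    circleHeatPrim_neg, add_neg_cancel_left]

theorem integral_neumannHeat (x y : ℝ) (hτ : 0 < τ) :
    ∫ z in (-1 : ℝ)..x, neumannHeat z y τ = neumannPrim x y τ := by
  rw [intervalIntegral.integral_eq_sub_of_hasDerivAt (fun z _ => hasDerivAt_neumannPrim z y hτ)
    ((continuous_neumannHeat_left y τ).intervalIntegrable _ _), neumannPrim_neg_one y hτ, sub_zero]

theorem neumannPrim_mem_Icc (hx : x ∈ Icc (-1) 1) (y τ : ℝ) : neumannPrim x y τ ∈ Icc 0 1 := by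
  rcases le_or_gt τ 0 with h | h
  · rw [neumannPrim_of_nonpos h]
    split_ifs <;> simp
  · have hmono : Monotone fun x => neumannPrim x y τ :=
      monotone_of_hasDerivAt_nonneg (fun x => hasDerivAt_neumannPrim x y h)
        fun x => neumannHeat_nonneg
    exact ⟨(neumannPrim_neg_one y h).symm.le.trans (hmono hx.1),
      (hmono hx.2).trans (neumannPrim_one y h).le⟩

end NeumannKernel

/-! ### Potentials of heat sources -/

/-- Heat sources of strength `g ω` released at the point `Y ω` at time `S ω`, observed for
`x ∈ I` and `t ∈ J` uniformly away from the singularity of the Neumann heat kernel. -/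
structure IsRegularSource {Ω : Type*} [MeasurableSpace Ω] (μ : Measure Ω) (g Y S : Ω → ℝ)
    (I J : Set ℝ) : Prop where
  integrable : Integrable g μ
  aemeasurable_position : AEMeasurable Y μ
  aemeasurable_time : AEMeasurable S μ
  exists_compact : ∃ K ⊆ heatDomain, IsCompact K ∧
    ∀ᵐ ω ∂μ, ∀ x ∈ I, ∀ t ∈ J, (x, Y ω, t - S ω) ∈ K

namespace IsRegularSource

variable {Ω : Type*} [MeasurableSpace Ω] {μ : Measure Ω} {g Y S : Ω → ℝ} {I J : Set ℝ}
  {k : ℝ → ℝ → ℝ → ℝ} {x t : ℝ}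

theorem aestronglyMeasurable (h : IsRegularSource μ g Y S I J)
    (hk : Measurable fun w : ℝ × ℝ × ℝ => k w.1 w.2.1 w.2.2) (x t : ℝ) :
    AEStronglyMeasurable (fun ω => g ω * k x (Y ω) (t - S ω)) μ :=
  h.integrable.aestronglyMeasurable.mul (hk.comp_aemeasurable (aemeasurable_const.prodMk
    (h.aemeasurable_position.prodMk (h.aemeasurable_time.const_sub t)))).aestronglyMeasurable

theorem ae_mem_heatDomain (h : IsRegularSource μ g Y S I J) :
    ∀ᵐ ω ∂μ, ∀ x ∈ I, ∀ t ∈ J, (x, Y ω, t - S ω) ∈ heatDomain := by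
  obtain ⟨K, hK, -, hmem⟩ := h.exists_compact
  filter_upwards [hmem] with ω hω x hx t ht using hK (hω x hx t ht)

theorem exists_bound (h : IsRegularSource μ g Y S I J)
    (hk : ContinuousOn (fun w : ℝ × ℝ × ℝ => k w.1 w.2.1 w.2.2) heatDomain) :
    ∃ B, ∀ᵐ ω ∂μ, ∀ x ∈ I, ∀ t ∈ J, ‖g ω * k x (Y ω) (t - S ω)‖ ≤ |g ω| * B := by
  obtain ⟨K, hK, hKc, hmem⟩ := h.exists_compact
  obtain ⟨B, hB⟩ := hKc.exists_bound_of_continuousOn (hk.mono hK)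
  refine ⟨B, ?_⟩
  filter_upwards [hmem] with ω hω x hx t ht
  rw [norm_mul, Real.norm_eq_abs]
  exact mul_le_mul_of_nonneg_left (hB _ (hω x hx t ht)) (abs_nonneg _)

theorem integrable_neumannHeat (h : IsRegularSource μ g Y S I J) (hx : x ∈ I) (ht : t ∈ J) :
    Integrable (fun ω => g ω * neumannHeat x (Y ω) (t - S ω)) μ := by
  obtain ⟨B, hB⟩ := h.exists_bound continuousOn_neumannHeat
  refine (h.integrable.abs.mul_const B).mono' (h.aestronglyMeasurable measurable_neumannHeat x t) ?_
  filter_upwards [hB] with ω hω using hω x hx t ht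

theorem integrable_neumannPrim (h : IsRegularSource μ g Y S I J) (hx : x ∈ I) (ht : t ∈ J) :
    Integrable (fun ω => g ω * neumannPrim x (Y ω) (t - S ω)) μ := by
  refine h.integrable.abs.mono' (h.aestronglyMeasurable measurable_neumannPrim x t) ?_
  filter_upwards [h.ae_mem_heatDomain] with ω hω
  obtain ⟨h₀, h₁⟩ := neumannPrim_mem_Icc (Ioo_subset_Icc_self (hω x hx t ht).1) (Y ω) (t - S ω)
  rw [norm_mul, Real.norm_eq_abs, Real.norm_of_nonneg h₀]
  exact mul_le_of_le_one_right (abs_nonneg _) h₁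

theorem continuousOn_deriv (h : IsRegularSource μ g Y S I J) :
    ContinuousOn (fun z : ℝ × ℝ => ∫ ω, g ω * neumannHeatDeriv z.1 (Y ω) (z.2 - S ω) ∂μ)
      (I ×ˢ J) := by
  obtain ⟨B, hB⟩ := h.exists_bound continuousOn_neumannHeatDeriv
  refine continuousOn_of_dominated (bound := fun ω => |g ω| * B)
    (fun z _ => h.aestronglyMeasurable measurable_neumannHeatDeriv z.1 z.2) (fun z hz => ?_)
    (h.integrable.abs.mul_const B) ?_
  · filter_upwards [hB] with ω hω using hω z.1 hz.1 z.2 hz.2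
  · filter_upwards [h.ae_mem_heatDomain] with ω hω
    exact continuousOn_const.mul (continuousOn_neumannHeatDeriv.comp
      (f := fun z : ℝ × ℝ => (z.1, Y ω, z.2 - S ω)) (by fun_prop)
      fun z hz => hω z.1 hz.1 z.2 hz.2)

theorem hasDerivAt_space (h : IsRegularSource μ g Y S I J) (hI : IsOpen I) (hx : x ∈ I)
    (ht : t ∈ J) :
    HasDerivAt (fun x => ∫ ω, g ω * neumannHeat x (Y ω) (t - S ω) ∂μ)
      (∫ ω, g ω * neumannHeatDeriv x (Y ω) (t - S ω) ∂μ) x := by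
  obtain ⟨B, hB⟩ := h.exists_bound continuousOn_neumannHeatDeriv
  refine (hasDerivAt_integral_of_dominated_loc_of_deriv_le (bound := fun ω => |g ω| * B)
    (F' := fun x ω => g ω * neumannHeatDeriv x (Y ω) (t - S ω)) (hI.mem_nhds hx)
    (.of_forall fun x => h.aestronglyMeasurable measurable_neumannHeat x t)
    (h.integrable_neumannHeat hx ht) (h.aestronglyMeasurable measurable_neumannHeatDeriv x t) ?_
    (h.integrable.abs.mul_const B)
    (.of_forall fun ω y _ => (hasDerivAt_neumannHeat y _ _).const_mul _)).2
  filter_upwards [hB] with ω hω y hy using hω y hy t ht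

theorem hasDerivAt_time (h : IsRegularSource μ g Y S I J) (hJ : IsOpen J) (hx : x ∈ I)
    (ht : t ∈ J) :
    HasDerivAt (fun t => ∫ ω, g ω * neumannPrim x (Y ω) (t - S ω) ∂μ)
      (∫ ω, g ω * neumannHeatDeriv x (Y ω) (t - S ω) ∂μ) t := by
  obtain ⟨B, hB⟩ := h.exists_bound continuousOn_neumannHeatDeriv
  refine (hasDerivAt_integral_of_dominated_loc_of_deriv_le (bound := fun ω => |g ω| * B)
    (F' := fun t ω => g ω * neumannHeatDeriv x (Y ω) (t - S ω)) (hJ.mem_nhds ht)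
    (.of_forall fun t => h.aestronglyMeasurable measurable_neumannPrim x t)
    (h.integrable_neumannPrim hx ht) (h.aestronglyMeasurable measurable_neumannHeatDeriv x t) ?_
    (h.integrable.abs.mul_const B) ?_).2
  · filter_upwards [hB] with ω hω s hs using hω x hx s hs
  · filter_upwards [h.ae_mem_heatDomain] with ω hω s hs
    exact ((hasDerivAt_neumannPrim_time (hω x hx s hs)).comp_sub_const s (S ω)).const_mul _

end IsRegularSource

/-! ### The free boundary problem with the flux extended to all times -/

section Sources

variable {a s : ℝ} {p : ℝ → ℝ}

/-- The position `p(s) - ā(s)` of the source on the left of the free boundary. -/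
noncomputable def leftSource (a : ℝ) (p : ℝ → ℝ) (s : ℝ) : ℝ := p s - abar a p s

/-- The position `p(s) + ā(s)` of the sink on the right of the free boundary. -/
noncomputable def rightSource (a : ℝ) (p : ℝ → ℝ) (s : ℝ) : ℝ := p s + abar a p s

/-- The temperature at `x`, a time `τ` after a unit amount of heat has been moved from the right to
the left source of time `s`. -/
noncomputable def dipoleHeat (a : ℝ) (p : ℝ → ℝ) (x s τ : ℝ) : ℝ :=
  neumannHeat x (leftSource a p s) τ - neumannHeat x (rightSource a p s) τ

/-- The primitive in `x` of `dipoleHeat` vanishing at `-1`. -/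
noncomputable def dipolePrim (a : ℝ) (p : ℝ → ℝ) (x s τ : ℝ) : ℝ :=
  neumannPrim x (leftSource a p s) τ - neumannPrim x (rightSource a p s) τ

theorem abar_pos (ha : 0 < a) (hp : p s ∈ Ioo (-1) 1) : 0 < abar a p s :=
  lt_min ha (lt_min (by linarith [hp.2]) (by linarith [hp.1]))

theorem abar_le_one_sub (a : ℝ) (p : ℝ → ℝ) (s : ℝ) : abar a p s ≤ 1 - p s :=
  (min_le_right _ _).trans (min_le_left _ _)

theorem abar_le_one_add (a : ℝ) (p : ℝ → ℝ) (s : ℝ) : abar a p s ≤ 1 + p s :=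
  (min_le_right _ _).trans (min_le_right _ _)

theorem leftSource_mem_Ico (ha : 0 < a) (hp : p s ∈ Ioo (-1) 1) :
    leftSource a p s ∈ Ico (-1) (p s) :=
  ⟨by unfold leftSource; linarith [abar_le_one_add a p s],
    sub_lt_self _ (abar_pos ha hp)⟩

theorem rightSource_mem_Ioc (ha : 0 < a) (hp : p s ∈ Ioo (-1) 1) :
    rightSource a p s ∈ Ioc (p s) 1 :=
  ⟨lt_add_of_pos_right _ (abar_pos ha hp),
    by unfold rightSource; linarith [abar_le_one_sub a p s]⟩

theorem continuousAt_abar (hp : ContinuousAt p s) : ContinuousAt (abar a p) s := by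
  unfold abar
  fun_prop

theorem measurable_abar (hp : Measurable p) : Measurable (abar a p) := by
  unfold abar
  fun_prop

theorem measurable_leftSource (hp : Measurable p) : Measurable (leftSource a p) :=
  hp.sub (measurable_abar hp)

theorem measurable_rightSource (hp : Measurable p) : Measurable (rightSource a p) :=
  hp.add (measurable_abar hp)

theorem measurable_dipoleHeat (hp : Measurable p) (t : ℝ) :
    Measurable fun z : ℝ × ℝ => dipoleHeat a p z.1 z.2 (t - z.2) := by
  have hl := measurable_leftSource (a := a) hp
  have hr := measurable_rightSource (a := a) hp
  exact (measurable_neumannHeat.comp (f := fun z : ℝ × ℝ => (z.1, leftSource a p z.2, t - z.2))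
    (by fun_prop)).sub (measurable_neumannHeat.comp
      (f := fun z : ℝ × ℝ => (z.1, rightSource a p z.2, t - z.2)) (by fun_prop))

theorem continuous_dipoleHeat (a : ℝ) (p : ℝ → ℝ) (s τ : ℝ) :
    Continuous fun x => dipoleHeat a p x s τ :=
  (continuous_neumannHeat_left _ τ).sub (continuous_neumannHeat_left _ τ)

theorem integral_dipoleHeat (a : ℝ) (p : ℝ → ℝ) (x s : ℝ) {τ : ℝ} (hτ : 0 < τ) :
    ∫ z in (-1)..x, dipoleHeat a p z s τ = dipolePrim a p x s τ := by
  unfold dipoleHeat dipolePrim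
  rw [intervalIntegral.integral_sub, integral_neumannHeat _ _ hτ, integral_neumannHeat _ _ hτ] <;>
    exact (continuous_neumannHeat_left _ τ).intervalIntegrable _ _

theorem integral_abs_dipoleHeat_le (a : ℝ) (p : ℝ → ℝ) (s : ℝ) {τ : ℝ} (hτ : 0 < τ) :
    ∫ z in (-1)..1, |dipoleHeat a p z s τ| ≤ 2 := by
  have hint : ∀ y, IntervalIntegrable (fun z => neumannHeat z y τ) volume (-1) 1 := fun y =>
    (continuous_neumannHeat_left y τ).intervalIntegrable _ _
  calc ∫ z in (-1)..1, |dipoleHeat a p z s τ|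
      ≤ ∫ z in (-1)..1,
          (neumannHeat z (leftSource a p s) τ + neumannHeat z (rightSource a p s) τ) := by
        refine intervalIntegral.integral_mono_on (by norm_num)
          ((continuous_dipoleHeat a p s τ).abs.intervalIntegrable _ _) ((hint _).add (hint _))
          fun z _ => (abs_sub _ _).trans_eq ?_
        rw [abs_of_nonneg neumannHeat_nonneg, abs_of_nonneg neumannHeat_nonneg]
    _ = 2 := by
        rw [intervalIntegral.integral_add (hint _) (hint _), integral_neumannHeat _ _ hτ,
          integral_neumannHeat _ _ hτ, neumannPrim_one _ hτ, neumannPrim_one _ hτ]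
        norm_num

theorem abs_dipolePrim_le_one {x : ℝ} (hx : x ∈ Icc (-1) 1) (s τ : ℝ) :
    |dipolePrim a p x s τ| ≤ 1 := by
  have hl := neumannPrim_mem_Icc hx (leftSource a p s) τ
  have hr := neumannPrim_mem_Icc hx (rightSource a p s) τ
  exact abs_sub_le_iff.2 ⟨by linarith [hl.2, hr.1], by linarith [hl.1, hr.2]⟩

end Sources

section InitialHeat

variable {fI : ℝ → ℝ} {x t : ℝ}

/-- The temperature at `(x, t)` of the heat flow with Neumann boundary conditions started at
`fI`. -/
noncomputable def initialHeat (fI : ℝ → ℝ) (x t : ℝ) : ℝ := ∫ y in (-1)..1, fI y * neumannHeat x y t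

/-- The primitive in `x` of `initialHeat` vanishing at `-1`. -/
noncomputable def initialPrim (fI : ℝ → ℝ) (x t : ℝ) : ℝ := ∫ y in (-1)..1, fI y * neumannPrim x y t

theorem continuous_initialHeat (hfI : Continuous fI) (t : ℝ) :
    Continuous fun x => initialHeat fI x t :=
  intervalIntegral.continuous_parametric_intervalIntegral_of_continuous'
    (f := fun x y => fI y * neumannHeat x y t)
    ((hfI.comp continuous_snd).mul (continuous_neumannHeat t)) _ _

theorem integral_initialHeat (hfI : Continuous fI) (ht : 0 < t) (hx : -1 ≤ x) :
    ∫ z in (-1)..x, initialHeat fI z t = initialPrim fI x t := by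
  have hcont : Continuous fun z : ℝ × ℝ => fI z.2 * neumannHeat z.1 z.2 t :=
    (hfI.comp continuous_snd).mul (continuous_neumannHeat t)
  unfold initialHeat initialPrim
  simp_rw [intervalIntegral.integral_of_le (show (-1 : ℝ) ≤ 1 by norm_num)]
  rw [intervalIntegral.integral_of_le hx, integral_integral_swap]
  · refine integral_congr_ae (.of_forall fun y => ?_)
    simp only
    rw [integral_const_mul, ← intervalIntegral.integral_of_le hx, integral_neumannHeat _ _ ht]
  · rw [Measure.prod_restrict]
    exact (hcont.continuousOn.integrableOn_compact (isCompact_Icc.prod isCompact_Icc)).mono_set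
      (prod_mono Ioc_subset_Icc_self Ioc_subset_Icc_self)

end InitialHeat

theorem integral_le_integral_of_sign_change {g : ℝ → ℝ} {α β q x : ℝ}
    (hg : IntegrableOn g (Icc α β)) (hq : q ∈ Icc α β) (hx : x ∈ Icc α β)
    (hpos : ∀ z ∈ Ico α q, 0 ≤ g z) (hneg : ∀ z ∈ Ioc q β, g z ≤ 0) :
    ∫ z in α..x, g z ≤ ∫ z in α..q, g z := by
  have hint : ∀ v ∈ Icc α β, IntervalIntegrable g volume α v := fun v hv =>
    (hg.mono_set (ordConnected_Icc.uIcc_subset ⟨le_rfl, hv.1.trans hv.2⟩ hv)).intervalIntegrable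
  rw [← sub_nonneg, intervalIntegral.integral_interval_sub_left (hint q hq) (hint x hx)]
  rcases le_total x q with hxq | hqx
  · rw [intervalIntegral.integral_of_le hxq, integral_Ioc_eq_integral_Ioo]
    exact setIntegral_nonneg measurableSet_Ioo fun z hz => hpos z ⟨hx.1.trans hz.1.le, hz.2⟩
  · rw [intervalIntegral.integral_symm, neg_nonneg, intervalIntegral.integral_of_le hqx,
      integral_Ioc_eq_integral_Ioo]
    exact setIntegral_nonpos measurableSet_Ioo fun z hz => hneg z ⟨hz.1, hz.2.le.trans hx.2⟩

/-- A solution of the free boundary problem on `(0, T)`, with the free boundary `p` and the flux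
`lam` extended to measurable functions on `ℝ` so that no case distinction on the time is needed,
and with a nonnegative flux. -/
structure IsExtendedSolution (T a : ℝ) (fI : ℝ → ℝ) (f : ℝ → ℝ → ℝ) (p lam : ℝ → ℝ) : Prop where
  a_pos : 0 < a
  continuous_initial : Continuous fI
  continuousOn_curve : ContinuousOn p (Ioo 0 T)
  measurable_curve : Measurable p
  curve_mem : ∀ t, p t ∈ Ioo (-1) 1
  pos_left : ∀ t ∈ Ioo 0 T, ∀ x ∈ Ico (-1) (p t), 0 < f x t
  neg_right : ∀ t ∈ Ioo 0 T, ∀ x ∈ Ioc (p t) 1, f x t < 0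
  hasDerivAt_curve : ∀ t ∈ Ioo 0 T, HasDerivAt (fun x => f x t) (-lam t) (p t)
  flux_nonneg : ∀ t, 0 ≤ lam t
  aestronglyMeasurable_flux : AEStronglyMeasurable lam volume
  integrableOn_flux : ∀ s t, 0 < s → t < T → IntegrableOn lam (Ioc s t)
  duhamel : ∀ t ∈ Ioo 0 T, ∀ x ∈ Icc (-1) 1,
    f x t = initialHeat fI x t + ∫ s in (0 : ℝ)..t, lam s * dipoleHeat a p x s (t - s)
  integrableOn : ∀ t ∈ Ioo 0 T, IntegrableOn (fun x => f x t) (Icc (-1) 1)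

namespace IsExtendedSolution

variable {T a x t : ℝ} {fI : ℝ → ℝ} {f : ℝ → ℝ → ℝ} {p lam D : ℝ → ℝ}

theorem leftSource_mem (h : IsExtendedSolution T a fI f p lam) (s : ℝ) :
    leftSource a p s ∈ Ico (-1) (p s) :=
  leftSource_mem_Ico h.a_pos (h.curve_mem s)

theorem rightSource_mem (h : IsExtendedSolution T a fI f p lam) (s : ℝ) :
    rightSource a p s ∈ Ioc (p s) 1 :=
  rightSource_mem_Ioc h.a_pos (h.curve_mem s)

theorem integral_le_integral_curve (h : IsExtendedSolution T a fI f p lam) (ht : t ∈ Ioo 0 T)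
    (hx : x ∈ Icc (-1) 1) : ∫ z in (-1)..x, f z t ≤ ∫ z in (-1)..(p t), f z t :=
  integral_le_integral_of_sign_change (h.integrableOn t ht)
    (Ioo_subset_Icc_self (h.curve_mem t)) hx (fun z hz => (h.pos_left t ht z hz).le)
    fun z hz => (h.neg_right t ht z hz).le

theorem integrable_prod_flux_mul_dipoleHeat (h : IsExtendedSolution T a fI f p lam)
    (hD : IntegrableOn D (Ioo 0 t))
    (hlam : ∀ s ∈ Ioo 0 t, lam s * ∫ z in (-1)..1, |dipoleHeat a p z s (t - s)| ≤ D s)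
    (hx : x ≤ 1) :
    Integrable (fun z : ℝ × ℝ => lam z.2 * dipoleHeat a p z.1 z.2 (t - z.2))
      ((volume.restrict (Ioc (-1) x)).prod (volume.restrict (Ioo 0 t))) := by
  have hmeas : AEStronglyMeasurable (fun z : ℝ × ℝ => lam z.2 * dipoleHeat a p z.1 z.2 (t - z.2))
      ((volume.restrict (Ioc (-1) x)).prod (volume.restrict (Ioo 0 t))) :=
    h.aestronglyMeasurable_flux.restrict.comp_snd.mul
      (measurable_dipoleHeat h.measurable_curve t).aestronglyMeasurable
  have hcont : ∀ s, Continuous fun z => dipoleHeat a p z s (t - s) := fun s =>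
    continuous_dipoleHeat a p s (t - s)
  refine (integrable_prod_iff' hmeas).2 ⟨.of_forall fun s =>
    ((hcont s).const_smul (lam s)).integrableOn_Icc.mono_set Ioc_subset_Icc_self,
    hD.mono' hmeas.norm.prod_swap.integral_prod_right' ?_⟩
  filter_upwards [ae_restrict_mem measurableSet_Ioo] with s hs
  refine le_trans ?_ (hlam s hs)
  rw [Real.norm_of_nonneg (by positivity)]
  simp only [norm_mul, Real.norm_eq_abs, abs_of_nonneg (h.flux_nonneg s)]
  rw [integral_const_mul, intervalIntegral.integral_of_le (by norm_num)]
  exact mul_le_mul_of_nonneg_left (setIntegral_mono_set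
    ((hcont s).abs.integrableOn_Icc.mono_set Ioc_subset_Icc_self)
    (.of_forall fun _ => abs_nonneg _) (Ioc_subset_Ioc_right hx).eventuallyLE) (h.flux_nonneg s)

theorem integral_eq_of_le (h : IsExtendedSolution T a fI f p lam) (ht : t ∈ Ioo 0 T)
    (hD : IntegrableOn D (Ioo 0 t))
    (hlam : ∀ s ∈ Ioo 0 t, lam s * ∫ z in (-1)..1, |dipoleHeat a p z s (t - s)| ≤ D s)
    (hx : x ∈ Icc (-1) 1) :
    ∫ z in (-1)..x, f z t =
      initialPrim fI x t + ∫ s in (0 : ℝ)..t, lam s * dipolePrim a p x s (t - s) := by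
  have hint := h.integrable_prod_flux_mul_dipoleHeat hD hlam hx.2
  have hf : ∫ z in (-1)..x, f z t = ∫ z in (-1)..x,
      (initialHeat fI z t + ∫ s in Ioo 0 t, lam s * dipoleHeat a p z s (t - s)) := by
    refine intervalIntegral.integral_congr fun z hz => ?_
    rw [uIcc_of_le hx.1] at hz
    rw [h.duhamel t ht z ⟨hz.1, hz.2.trans hx.2⟩, intervalIntegral.integral_of_le ht.1.le,
      integral_Ioc_eq_integral_Ioo]
  rw [hf, intervalIntegral.integral_add
    ((continuous_initialHeat h.continuous_initial t).intervalIntegrable _ _)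
    ((intervalIntegrable_iff_integrableOn_Ioc_of_le hx.1).2 hint.integral_prod_left),
    integral_initialHeat h.continuous_initial ht.1 hx.1, intervalIntegral.integral_of_le hx.1,
    integral_integral_swap hint, intervalIntegral.integral_of_le ht.1.le,
    integral_Ioc_eq_integral_Ioo]
  congr 1
  refine setIntegral_congr_fun measurableSet_Ioo fun s hs => ?_
  simp only
  rw [integral_const_mul, ← intervalIntegral.integral_of_le hx.1,
    integral_dipoleHeat _ _ _ _ (sub_pos.2 hs.2)]

theorem integral_eq (h : IsExtendedSolution T a fI f p lam) (ht : t ∈ Ioo 0 T)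
    (hlam : IntegrableOn lam (Ioc 0 t)) (hx : x ∈ Icc (-1) 1) :
    ∫ z in (-1)..x, f z t =
      initialPrim fI x t + ∫ s in (0 : ℝ)..t, lam s * dipolePrim a p x s (t - s) :=
  h.integral_eq_of_le ht ((hlam.mono_set Ioo_subset_Ioc_self).mul_const 2) (fun s hs =>
    mul_le_mul_of_nonneg_left (integral_abs_dipoleHeat_le a p s (sub_pos.2 hs.2))
      (h.flux_nonneg s)) hx

end IsExtendedSolution

/-! ### The maximum of the integrated temperature along the free boundary -/

theorem hasDerivAt_comp_of_max {X : Type*} [TopologicalSpace X] {F : X → ℝ → ℝ} {φ : X × ℝ → ℝ}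
    {p : ℝ → X} {t₀ : ℝ} (hp : ContinuousAt p t₀)
    (hF : ∀ᶠ z in 𝓝 (p t₀, t₀), HasDerivAt (F z.1) (φ z) z.2)
    (hφ : ContinuousAt φ (p t₀, t₀)) (hmax : ∀ᶠ t in 𝓝 t₀, F (p t₀) t ≤ F (p t) t)
    (hmax₀ : ∀ᶠ t in 𝓝 t₀, F (p t) t₀ ≤ F (p t₀) t₀) :
    HasDerivAt (fun t => F (p t) t) (φ (p t₀, t₀)) t₀ := by
  set c := φ (p t₀, t₀)
  have hmv : ∀ η > 0, ∀ᶠ z in 𝓝 (p t₀, t₀),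
      ‖F z.1 z.2 - F z.1 t₀ - (z.2 - t₀) * c‖ ≤ η * ‖z.2 - t₀‖ := fun η hη => by
    have hnear := hF.and (Metric.tendsto_nhds.1 hφ η hη)
    rw [nhds_prod_eq] at hnear
    obtain ⟨P, hP, Q, hQ, hPQ⟩ := eventually_prod_iff.1 hnear
    obtain ⟨r, hr, hball⟩ := Metric.eventually_nhds_iff_ball.1 hQ
    rw [nhds_prod_eq]
    refine (hP.prod_mk (Metric.ball_mem_nhds t₀ hr)).mono fun z hz => ?_
    have hderiv : ∀ s ∈ Metric.ball t₀ r,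
        HasDerivWithinAt (fun s => F z.1 s - s * c) (φ (z.1, s) - c) (Metric.ball t₀ r) s :=
      fun s hs => by
        simpa using ((hPQ hz.1 (hball s hs)).1.fun_sub
          ((hasDerivAt_id s).mul_const c)).hasDerivWithinAt
    have := (convex_ball t₀ r).norm_image_sub_le_of_norm_hasDerivWithin_le hderiv
      (fun s hs => (dist_eq_norm _ _).symm.trans_le (hPQ hz.1 (hball s hs)).2.le)
      (Metric.mem_ball_self hr) hz.2
    rwa [show F z.1 z.2 - z.2 * c - (F z.1 t₀ - t₀ * c) =
      F z.1 z.2 - F z.1 t₀ - (z.2 - t₀) * c by ring] at this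
  refine hasDerivAt_iff_isLittleO.2 (Asymptotics.isLittleO_iff.2 fun η hη => ?_)
  filter_upwards [hmax, hmax₀, (hp.prodMk_nhds continuousAt_id).eventually (hmv η hη),
    (continuousAt_const.prodMk_nhds continuousAt_id).eventually (hmv η hη)] with t h₁ h₂ h₃ h₄
  simp only [id_eq, Real.norm_eq_abs, smul_eq_mul, abs_le] at h₃ h₄ ⊢
  constructor <;> linarith

theorem IsRegularSource.of_away {Ω : Type*} [MeasurableSpace Ω] {μ : Measure Ω} {g Y S : Ω → ℝ}
    {q ε η R : ℝ} {J : Set ℝ} (hg : Integrable g μ) (hY : AEMeasurable Y μ) (hS : AEMeasurable S μ)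
    (hq : Icc (q - ε) (q + ε) ⊆ Ioo (-1) 1) (hη : 0 < η)
    (haway : ∀ᵐ ω ∂μ, Y ω ∈ Icc (-1) 1 ∧ ∀ x ∈ Ioo (q - ε) (q + ε), ∀ t ∈ J,
      |t - S ω| ≤ R ∧ (η ≤ t - S ω ∨ η ≤ |x - Y ω|)) :
    IsRegularSource μ g Y S (Ioo (q - ε) (q + ε)) J where
  integrable := hg
  aemeasurable_position := hY
  aemeasurable_time := hS
  exists_compact := by
    refine ⟨(Icc (q - ε) (q + ε) ×ˢ Icc (-1) 1 ×ˢ Icc (-R) R) ∩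
      {w | η ≤ w.2.2 ∨ η ≤ |w.1 - w.2.1|}, fun w hw => ⟨hq hw.1.1, hw.1.2.1, ?_⟩, ?_, ?_⟩
    · refine hw.2.imp hη.trans_le fun h heq => hη.not_ge ?_
      rwa [heq, sub_self, abs_zero] at h
    · refine (isCompact_Icc.prod (isCompact_Icc.prod isCompact_Icc)).inter_right ?_
      have hτ : Continuous fun w : ℝ × ℝ × ℝ => w.2.2 := by fun_prop
      have hxy : Continuous fun w : ℝ × ℝ × ℝ => |w.1 - w.2.1| := by fun_prop
      exact (isClosed_le continuous_const hτ).union (isClosed_le continuous_const hxy)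
    · filter_upwards [haway] with ω hω x hx t ht
      obtain ⟨hR, hsep⟩ := hω.2 x hx t ht
      exact ⟨⟨Ioo_subset_Icc_self hx, hω.1, abs_le.1 hR⟩, hsep⟩

/-- The superposition, with kernel `k`, of the sources of the initial datum `fI` and of the dipoles
of strength `lam` created along the free boundary until the time `T'`. -/
noncomputable def sourcePotential (k : ℝ → ℝ → ℝ → ℝ) (a : ℝ) (fI p lam : ℝ → ℝ)
    (T' x t : ℝ) : ℝ :=
  (∫ y in Ioc (-1) 1, fI y * k x y (t - 0)) +
    ((∫ s in Ioc 0 T', lam s * k x (leftSource a p s) (t - s)) -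
      ∫ s in Ioc 0 T', lam s * k x (rightSource a p s) (t - s))

/-- A rectangle of half-widths `ε` in space and `δ` in time around the point `(q, t₀)` of the free
boundary, from which the sources stay at distance more than `ε`. -/
structure IsCurveBox (T a : ℝ) (p : ℝ → ℝ) (q t₀ ε δ : ℝ) : Prop where
  width_pos : 0 < ε
  duration_pos : 0 < δ
  space_subset : Icc (q - ε) (q + ε) ⊆ Ioo (-1) 1
  time_mem : ∀ s ∈ Icc (t₀ - δ) (t₀ + δ), s ∈ Ioo 0 T
  curve_mem : ∀ s ∈ Icc (t₀ - δ) (t₀ + δ), p s ∈ Ioo (q - ε) (q + ε)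
  leftSource_lt : ∀ s ∈ Icc (t₀ - δ) (t₀ + δ), leftSource a p s < q - 2 * ε
  lt_rightSource : ∀ s ∈ Icc (t₀ - δ) (t₀ + δ), q + 2 * ε < rightSource a p s

namespace IsExtendedSolution

theorem exists_isCurveBox {T a t₀ : ℝ} {fI : ℝ → ℝ} {f : ℝ → ℝ → ℝ} {p lam : ℝ → ℝ}
    (h : IsExtendedSolution T a fI f p lam) (ht₀ : t₀ ∈ Ioo 0 T) :
    ∃ ε δ, IsCurveBox T a p (p t₀) t₀ ε δ := by
  have hpc : ContinuousAt p t₀ := h.continuousOn_curve.continuousAt (isOpen_Ioo.mem_nhds ht₀)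
  have hac : ContinuousAt (abar a p) t₀ := continuousAt_abar hpc
  have hr : 0 < abar a p t₀ := abar_pos h.a_pos (h.curve_mem t₀)
  obtain ⟨ε, hε, hε'⟩ : ∃ ε, 0 < ε ∧ 2 * ε < abar a p t₀ :=
    ⟨abar a p t₀ / 4, by linarith, by linarith⟩
  have hp : ∀ᶠ s in 𝓝 t₀, p s ∈ Ioo (p t₀ - ε) (p t₀ + ε) :=
    hpc.eventually (Ioo_mem_nhds (by linarith) (by linarith))
  have hleft : ∀ᶠ s in 𝓝 t₀, leftSource a p s < p t₀ - 2 * ε :=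
    (hpc.fun_sub hac).eventually_lt continuousAt_const (by linarith)
  have hright : ∀ᶠ s in 𝓝 t₀, p t₀ + 2 * ε < rightSource a p s := by
    unfold rightSource
    exact continuousAt_const.eventually_lt (hpc.fun_add hac) (by linarith)
  obtain ⟨δ, hδ, hbox⟩ := Metric.nhds_basis_closedBall.eventually_iff.1
    ((isOpen_Ioo.eventually_mem ht₀).and (hp.and (hleft.and hright)))
  rw [Real.closedBall_eq_Icc] at hbox
  have h₁ := abar_le_one_add a p t₀
  have h₂ := abar_le_one_sub a p t₀
  exact ⟨ε, δ, hε, hδ, Icc_subset_Ioo (by linarith) (by linarith), fun s hs => (hbox hs).1,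
    fun s hs => (hbox hs).2.1, fun s hs => (hbox hs).2.2.1, fun s hs => (hbox hs).2.2.2⟩

end IsExtendedSolution

namespace IsCurveBox

variable {T a x t q t₀ ε δ : ℝ} {fI : ℝ → ℝ} {f : ℝ → ℝ → ℝ} {p lam Y : ℝ → ℝ}

theorem mem_Ioo (hbox : IsCurveBox T a p q t₀ ε δ) (ht : t ∈ Ioo (t₀ - δ / 2) (t₀ + δ / 2)) :
    t ∈ Ioo 0 T :=
  hbox.time_mem t ⟨by linarith [ht.1, hbox.duration_pos], by linarith [ht.2, hbox.duration_pos]⟩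

theorem isRegularSource_initial (hbox : IsCurveBox T a p q t₀ ε δ) (hfI : Continuous fI) :
    IsRegularSource (volume.restrict (Ioc (-1) 1)) fI (fun y => y) (fun _ => 0)
      (Ioo (q - ε) (q + ε)) (Ioo (t₀ - δ / 2) (t₀ + δ / 2)) := by
  have hδ := hbox.duration_pos
  refine .of_away (R := T) (hfI.integrableOn_Icc.mono_set Ioc_subset_Icc_self) aemeasurable_id
    aemeasurable_const hbox.space_subset (half_pos hδ) ?_
  filter_upwards [ae_restrict_mem measurableSet_Ioc] with y hy
  refine ⟨Ioc_subset_Icc_self hy, fun x _ t ht => ⟨?_, Or.inl ?_⟩⟩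
  · have := hbox.mem_Ioo ht
    rw [sub_zero, abs_of_pos this.1]
    exact this.2.le
  · linarith [ht.1, (hbox.time_mem (t₀ - δ) ⟨le_rfl, by linarith⟩).1]

theorem isRegularSource_flux (hbox : IsCurveBox T a p q t₀ ε δ)
    (hlam : IntegrableOn lam (Ioc 0 (t₀ + δ))) (hY : Measurable Y) (hmem : ∀ s, Y s ∈ Icc (-1) 1)
    (haway : ∀ s ∈ Icc (t₀ - δ) (t₀ + δ), Y s < q - 2 * ε ∨ q + 2 * ε < Y s) :
    IsRegularSource (volume.restrict (Ioc 0 (t₀ + δ))) lam Y (fun s => s)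
      (Ioo (q - ε) (q + ε)) (Ioo (t₀ - δ / 2) (t₀ + δ / 2)) := by
  have hδ := hbox.duration_pos
  refine .of_away (R := T) (η := min (δ / 2) ε) hlam hY.aemeasurable aemeasurable_id
    hbox.space_subset (lt_min (half_pos hδ) hbox.width_pos) ?_
  filter_upwards [ae_restrict_mem measurableSet_Ioc] with s hs
  refine ⟨hmem s, fun x hx t ht => ⟨?_, ?_⟩⟩
  · have hT := (hbox.time_mem (t₀ + δ) ⟨by linarith, le_rfl⟩).2
    exact abs_le.2 ⟨by linarith [hs.2, (hbox.mem_Ioo ht).1],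
      by linarith [hs.1, (hbox.mem_Ioo ht).2]⟩
  · rcases lt_or_ge s (t₀ - δ) with hlt | hge
    · exact .inl ((min_le_left _ _).trans (by linarith [ht.1]))
    · refine .inr ((min_le_right _ _).trans (le_abs.2 ?_))
      exact (haway s ⟨hge, hs.2⟩).imp (fun h => by linarith [hx.1]) fun h => by linarith [hx.2]

variable (h : IsExtendedSolution T a fI f p lam) (hbox : IsCurveBox T a p q t₀ ε δ)
  (hlam : IntegrableOn lam (Ioc 0 (t₀ + δ)))

include h hbox hlam

theorem isRegularSource_left :
    IsRegularSource (volume.restrict (Ioc 0 (t₀ + δ))) lam (leftSource a p) (fun s => s)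
      (Ioo (q - ε) (q + ε)) (Ioo (t₀ - δ / 2) (t₀ + δ / 2)) :=
  hbox.isRegularSource_flux hlam (measurable_leftSource h.measurable_curve)
    (fun s => ⟨(h.leftSource_mem s).1, ((h.leftSource_mem s).2.trans (h.curve_mem s).2).le⟩)
    fun s hs => .inl (hbox.leftSource_lt s hs)

theorem isRegularSource_right :
    IsRegularSource (volume.restrict (Ioc 0 (t₀ + δ))) lam (rightSource a p) (fun s => s)
      (Ioo (q - ε) (q + ε)) (Ioo (t₀ - δ / 2) (t₀ + δ / 2)) :=
  hbox.isRegularSource_flux hlam (measurable_rightSource h.measurable_curve)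
    (fun s => ⟨((h.curve_mem s).1.trans (h.rightSource_mem s).1).le, (h.rightSource_mem s).2⟩)
    fun s hs => .inr (hbox.lt_rightSource s hs)

theorem continuousOn_sourcePotential_deriv :
    ContinuousOn
      (fun z : ℝ × ℝ => sourcePotential neumannHeatDeriv a fI p lam (t₀ + δ) z.1 z.2)
      (Ioo (q - ε) (q + ε) ×ˢ Ioo (t₀ - δ / 2) (t₀ + δ / 2)) :=
  (hbox.isRegularSource_initial h.continuous_initial).continuousOn_deriv.add
    ((isRegularSource_left h hbox hlam).continuousOn_deriv.sub
      (isRegularSource_right h hbox hlam).continuousOn_deriv)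

theorem eq_sourcePotential (hx : x ∈ Ioo (q - ε) (q + ε)) (ht : t ∈ Ioo (t₀ - δ / 2) (t₀ + δ / 2)) :
    f x t = sourcePotential neumannHeat a fI p lam (t₀ + δ) x t := by
  have htT := hbox.mem_Ioo ht
  have hsub : Ioc 0 t ⊆ Ioc 0 (t₀ + δ) :=
    Ioc_subset_Ioc_right (by linarith [ht.2, hbox.duration_pos])
  rw [h.duhamel t htT x (Ioo_subset_Icc_self (hbox.space_subset (Ioo_subset_Icc_self hx))),
    sourcePotential,
    ← integral_sub ((isRegularSource_left h hbox hlam).integrable_neumannHeat hx ht)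
      ((isRegularSource_right h hbox hlam).integrable_neumannHeat hx ht), initialHeat,
    intervalIntegral.integral_of_le (by norm_num), intervalIntegral.integral_of_le htT.1.le,
    sub_zero]
  congr 1
  simp only [← mul_sub]
  refine (setIntegral_eq_of_subset_of_forall_sdiff_eq_zero measurableSet_Ioc hsub
    fun s hs => ?_).symm
  have hts : t - s ≤ 0 := by
    by_contra! hpos
    exact hs.2 ⟨hs.1.1, by linarith⟩
  rw [dipoleHeat, neumannHeat_of_nonpos hts, neumannHeat_of_nonpos hts, sub_zero, mul_zero]

theorem flux_eq_neg_sourcePotential (ht : t ∈ Ioo (t₀ - δ / 2) (t₀ + δ / 2)) :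
    lam t = -sourcePotential neumannHeatDeriv a fI p lam (t₀ + δ) (p t) t := by
  have hpt : p t ∈ Ioo (q - ε) (q + ε) := hbox.curve_mem t
    ⟨by linarith [ht.1, hbox.duration_pos], by linarith [ht.2, hbox.duration_pos]⟩
  have hderiv : HasDerivAt (fun x => sourcePotential neumannHeat a fI p lam (t₀ + δ) x t)
      (sourcePotential neumannHeatDeriv a fI p lam (t₀ + δ) (p t) t) (p t) :=
    ((hbox.isRegularSource_initial h.continuous_initial).hasDerivAt_space isOpen_Ioo hpt ht).add
      (((isRegularSource_left h hbox hlam).hasDerivAt_space isOpen_Ioo hpt ht).sub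
        ((isRegularSource_right h hbox hlam).hasDerivAt_space isOpen_Ioo hpt ht))
  have heq : (fun x => f x t) =ᶠ[𝓝 (p t)]
      fun x => sourcePotential neumannHeat a fI p lam (t₀ + δ) x t := by
    filter_upwards [isOpen_Ioo.mem_nhds hpt] with x hx using eq_sourcePotential h hbox hlam hx ht
  linarith [(h.hasDerivAt_curve t (hbox.mem_Ioo ht)).unique (hderiv.congr_of_eventuallyEq heq)]

/- The dipoles created after the time `t` see the noncausal value `1` of the primitive of the kernel
near the free boundary, which the last integral compensates. -/
theorem integral_eq_sourcePotential (hx : x ∈ Ioo (q - ε) (q + ε))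
    (ht : t ∈ Ioo (t₀ - δ / 2) (t₀ + δ / 2)) :
    ∫ z in (-1)..x, f z t =
      sourcePotential neumannPrim a fI p lam (t₀ + δ) x t - ∫ s in t..(t₀ + δ), lam s := by
  have htT := hbox.mem_Ioo ht
  have htδ : t ≤ t₀ + δ := by linarith [ht.2, hbox.duration_pos]
  have hleft := (isRegularSource_left h hbox hlam).integrable_neumannPrim hx ht
  have hright := (isRegularSource_right h hbox hlam).integrable_neumannPrim hx ht
  have hint := hleft.sub hright
  simp only [Pi.sub_def, ← mul_sub, ← dipolePrim.eq_1] at hint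
  rw [← IntegrableOn, ← intervalIntegrable_iff_integrableOn_Ioc_of_le (htT.1.le.trans htδ)] at hint
  have hlate : ∀ s ∈ uIcc t (t₀ + δ), lam s * dipolePrim a p x s (t - s) = lam s := by
    intro s hs
    rw [uIcc_of_le htδ] at hs
    have hs' : s ∈ Icc (t₀ - δ) (t₀ + δ) := ⟨by linarith [ht.1, hs.1, hbox.duration_pos], hs.2⟩
    rw [dipolePrim, neumannPrim_of_nonpos (by linarith [hs.1]),
      neumannPrim_of_nonpos (by linarith [hs.1]),
      if_pos (by linarith [hbox.leftSource_lt s hs', hx.1, hbox.width_pos]),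
      if_neg (by linarith [hbox.lt_rightSource s hs', hx.2, hbox.width_pos]), sub_zero, mul_one]
  rw [h.integral_eq htT (hlam.mono_set (Ioc_subset_Ioc_right htδ))
    (Ioo_subset_Icc_self (hbox.space_subset (Ioo_subset_Icc_self hx))), sourcePotential,
    ← integral_sub hleft hright, initialPrim, intervalIntegral.integral_of_le (by norm_num),
    sub_zero, add_sub_assoc]
  simp only [← mul_sub, ← dipolePrim.eq_1]
  rw [← intervalIntegral.integral_of_le (htT.1.le.trans htδ),
    ← intervalIntegral.integral_congr hlate, eq_sub_iff_add_eq.2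
      (intervalIntegral.integral_add_adjacent_intervals (hint.mono_set ?_) (hint.mono_set ?_))]
  · rw [uIcc_of_le htT.1.le, uIcc_of_le (htT.1.le.trans htδ)]
    exact Icc_subset_Icc_right htδ
  · rw [uIcc_of_le htδ, uIcc_of_le (htT.1.le.trans htδ)]
    exact Icc_subset_Icc_left htT.1.le

theorem hasDerivAt_integral (hx : x ∈ Ioo (q - ε) (q + ε))
    (ht : t ∈ Ioo (t₀ - δ / 2) (t₀ + δ / 2)) :
    HasDerivAt (fun t => ∫ z in (-1)..x, f z t)
      (sourcePotential neumannHeatDeriv a fI p lam (t₀ + δ) x t -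
        sourcePotential neumannHeatDeriv a fI p lam (t₀ + δ) (p t) t) t := by
  have hδ := hbox.duration_pos
  have hcurve : ContinuousOn lam (Ioo (t₀ - δ / 2) (t₀ + δ / 2)) := by
    refine ((continuousOn_sourcePotential_deriv h hbox hlam).comp (f := fun t => (p t, t))
      ((h.continuousOn_curve.mono fun t => hbox.mem_Ioo).prodMk continuousOn_id)
      fun t ht => ⟨hbox.curve_mem t ⟨by linarith [ht.1], by linarith [ht.2]⟩, ht⟩).neg.congr
      fun t ht => flux_eq_neg_sourcePotential h hbox hlam ht
  have hflux : HasDerivAt (fun t => ∫ s in t..(t₀ + δ), lam s) (-lam t) t :=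
    intervalIntegral.integral_hasDerivAt_left
      ((intervalIntegrable_iff_integrableOn_Ioc_of_le (by linarith [ht.2])).2
        (hlam.mono_set (Ioc_subset_Ioc_left (hbox.mem_Ioo ht).1.le)))
      h.aestronglyMeasurable_flux.stronglyMeasurableAtFilter
      (hcurve.continuousAt (isOpen_Ioo.mem_nhds ht))
  have hpot : HasDerivAt (fun t => sourcePotential neumannPrim a fI p lam (t₀ + δ) x t)
      (sourcePotential neumannHeatDeriv a fI p lam (t₀ + δ) x t) t :=
    ((hbox.isRegularSource_initial h.continuous_initial).hasDerivAt_time isOpen_Ioo hx ht).add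
      (((isRegularSource_left h hbox hlam).hasDerivAt_time isOpen_Ioo hx ht).sub
        ((isRegularSource_right h hbox hlam).hasDerivAt_time isOpen_Ioo hx ht))
  have := hpot.sub hflux
  rw [flux_eq_neg_sourcePotential h hbox hlam ht, neg_neg] at this
  refine this.congr_of_eventuallyEq ?_
  filter_upwards [isOpen_Ioo.mem_nhds ht] with t' ht'
    using integral_eq_sourcePotential h hbox hlam hx ht'

end IsCurveBox

namespace IsExtendedSolution

variable {T a t₀ t : ℝ} {fI : ℝ → ℝ} {f : ℝ → ℝ → ℝ} {p lam : ℝ → ℝ}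

theorem hasDerivAt_integral_curve (h : IsExtendedSolution T a fI f p lam)
    (hlam : ∀ t < T, IntegrableOn lam (Ioc 0 t)) (ht₀ : t₀ ∈ Ioo 0 T) :
    HasDerivAt (fun t => ∫ z in (-1)..(p t), f z t) 0 t₀ := by
  obtain ⟨ε, δ, hbox⟩ := h.exists_isCurveBox ht₀
  have hδ := hbox.duration_pos
  have hlam' := hlam _ (hbox.time_mem (t₀ + δ) ⟨by linarith, le_rfl⟩).2
  have ht₀' : t₀ ∈ Ioo (t₀ - δ / 2) (t₀ + δ / 2) := ⟨by linarith, by linarith⟩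
  have hpc : ContinuousAt p t₀ := h.continuousOn_curve.continuousAt (isOpen_Ioo.mem_nhds ht₀)
  have hnhds : Ioo (p t₀ - ε) (p t₀ + ε) ×ˢ Ioo (t₀ - δ / 2) (t₀ + δ / 2) ∈ 𝓝 (p t₀, t₀) :=
    (isOpen_Ioo.prod isOpen_Ioo).mem_nhds
      ⟨⟨by linarith [hbox.width_pos], by linarith [hbox.width_pos]⟩, ht₀'⟩
  set V : ℝ × ℝ → ℝ := fun z => sourcePotential neumannHeatDeriv a fI p lam (t₀ + δ) z.1 z.2
  have hV : ContinuousAt V (p t₀, t₀) :=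
    (IsCurveBox.continuousOn_sourcePotential_deriv h hbox hlam').continuousAt hnhds
  have hφ : ContinuousAt (fun z : ℝ × ℝ => V z - V (p z.2, z.2)) (p t₀, t₀) :=
    hV.sub (ContinuousAt.comp (x := (p t₀, t₀)) (f := fun z : ℝ × ℝ => (p z.2, z.2)) hV
      ((hpc.comp_of_eq continuousAt_snd rfl).prodMk continuousAt_snd))
  have hmem : ∀ t, p t ∈ Icc (-1) 1 := fun t => Ioo_subset_Icc_self (h.curve_mem t)
  have := hasDerivAt_comp_of_max (F := fun x t => ∫ z in (-1)..x, f z t) hpc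
    (by filter_upwards [hnhds] with z hz
          using IsCurveBox.hasDerivAt_integral h hbox hlam' hz.1 hz.2) hφ
    (by filter_upwards [isOpen_Ioo.mem_nhds ht₀] with t ht
          using h.integral_le_integral_curve ht (hmem t₀))
    (.of_forall fun t => h.integral_le_integral_curve ht₀ (hmem t))
  simpa using this

theorem integral_curve_eq (h : IsExtendedSolution T a fI f p lam)
    (hlam : ∀ t < T, IntegrableOn lam (Ioc 0 t)) (ht₀ : t₀ ∈ Ioo 0 T) (ht : t ∈ Ioo 0 T) :
    ∫ z in (-1)..(p t₀), f z t₀ = ∫ z in (-1)..(p t), f z t :=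
  isOpen_Ioo.is_const_of_deriv_eq_zero isPreconnected_Ioo
    (f := fun t => ∫ z in (-1)..(p t), f z t)
    (fun _ ht => (h.hasDerivAt_integral_curve hlam ht).differentiableAt.differentiableWithinAt)
    (fun _ ht => (h.hasDerivAt_integral_curve hlam ht).deriv) ht₀ ht

end IsExtendedSolution

/-! ### The limit at the initial time -/

section InitialTime

variable {fI : ℝ → ℝ} {q x t : ℝ}

theorem measurable_neumannPrim_middle (x t : ℝ) : Measurable fun y => neumannPrim x y t :=
  measurable_neumannPrim.comp (f := fun y => (x, y, t)) (by fun_prop)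

theorem tendsto_initialPrim (hfI : Continuous fI) (hx : x ∈ Ioo (-1) 1) :
    Tendsto (initialPrim fI x) (𝓝[>] 0) (𝓝 (∫ y in (-1)..x, fI y)) := by
  have hlim : ∫ y in (-1)..x, fI y = ∫ y in Ioc (-1) 1, (Iic x).indicator fI y := by
    rw [setIntegral_indicator measurableSet_Iic, Ioc_inter_Iic, min_eq_right hx.2.le,
      intervalIntegral.integral_of_le hx.1.le]
  rw [hlim]
  unfold initialPrim
  simp_rw [intervalIntegral.integral_of_le (show (-1 : ℝ) ≤ 1 by norm_num)]
  refine tendsto_integral_filter_of_dominated_convergence (fun y => |fI y|)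
    (.of_forall fun t => hfI.aestronglyMeasurable.mul
      (measurable_neumannPrim_middle x t).aestronglyMeasurable)
    (.of_forall fun t => .of_forall fun y => ?_)
    (hfI.abs.integrableOn_Icc.mono_set Ioc_subset_Icc_self) ?_
  · have hN := neumannPrim_mem_Icc (Ioo_subset_Icc_self hx) y t
    rw [norm_mul, Real.norm_of_nonneg hN.1]
    exact mul_le_of_le_one_right (norm_nonneg _) hN.2
  · filter_upwards [ae_restrict_of_ae (Measure.ae_ne volume x),
      ae_restrict_mem measurableSet_Ioc] with y hyx hy
    have hN := (tendsto_neumannPrim hx (Ioc_subset_Icc_self hy) hyx.symm).const_mul (fI y)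
    rcases hyx.lt_or_gt with hlt | hgt
    · simpa [hlt, hlt.le] using hN
    · simpa [hgt, hgt.not_gt] using hN

/-- The bathtub principle: `initialPrim fI x t` integrates `fI` against a weight between `0` and
`1`. -/
theorem initialPrim_le_integral_of_sign_change (hfI : Continuous fI) (hq : q ∈ Icc (-1) 1)
    (hpos : ∀ y ∈ Ico (-1) q, 0 ≤ fI y) (hneg : ∀ y ∈ Ioc q 1, fI y ≤ 0)
    (hx : x ∈ Icc (-1) 1) (t : ℝ) : initialPrim fI x t ≤ ∫ y in (-1)..q, fI y := by
  have hN := fun y => neumannPrim_mem_Icc hx y t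
  have hint : ∀ u v, IntervalIntegrable (fun y => fI y * neumannPrim x y t) volume u v :=
    fun u v => (intervalIntegrable_iff.2 ((intervalIntegrable_iff.1
      (hfI.intervalIntegrable u v)).mul_bdd (c := 1)
      (measurable_neumannPrim_middle x t).aestronglyMeasurable
      (.of_forall fun y => (Real.norm_of_nonneg (hN y).1).trans_le (hN y).2)))
  have hleft : ∫ y in (-1)..q, fI y * neumannPrim x y t ≤ ∫ y in (-1)..q, fI y :=
    intervalIntegral.integral_mono_on_of_le_Ioo hq.1 (hint _ _) (hfI.intervalIntegrable _ _)
      fun y hy => mul_le_of_le_one_right (hpos y (Ioo_subset_Ico_self hy)) (hN y).2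
  have hright : ∫ y in q..1, fI y * neumannPrim x y t ≤ 0 :=
    (intervalIntegral.integral_mono_on_of_le_Ioo hq.2 (hint _ _) intervalIntegrable_const
      fun y hy => mul_nonpos_of_nonpos_of_nonneg (hneg y (Ioo_subset_Ioc_self hy))
        (hN y).1).trans_eq intervalIntegral.integral_zero
  rw [initialPrim, ← intervalIntegral.integral_add_adjacent_intervals (hint _ q) (hint q _)]
  linarith

theorem initialPrim_one (fI : ℝ → ℝ) (ht : 0 < t) :
    initialPrim fI 1 t = ∫ y in (-1)..1, fI y := by
  simp [initialPrim, neumannPrim_one _ ht]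

theorem tendsto_integral_nhdsGT_zero {g : ℝ → ℝ} (ht : 0 < t) (hg : IntegrableOn g (Ioc 0 t)) :
    Tendsto (fun t => ∫ s in (0 : ℝ)..t, g s) (𝓝[>] 0) (𝓝 0) := by
  have hcont := intervalIntegral.continuousOn_primitive_interval'
    ((intervalIntegrable_iff_integrableOn_Ioc_of_le ht.le).2 hg) left_mem_uIcc 0 left_mem_uIcc
  rw [ContinuousWithinAt, intervalIntegral.integral_same, uIcc_of_le ht.le] at hcont
  exact hcont.mono_left (nhdsWithin_le_of_mem (Icc_mem_nhdsGT ht))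

end InitialTime

namespace IsExtendedSolution

variable {T a q t x : ℝ} {fI : ℝ → ℝ} {f : ℝ → ℝ → ℝ} {p lam : ℝ → ℝ}

theorem abs_integral_flux_mul_dipolePrim_le (h : IsExtendedSolution T a fI f p lam) (ht : 0 < t)
    (hlam : IntegrableOn lam (Ioc 0 t)) (hx : x ∈ Icc (-1) 1) :
    |∫ s in (0 : ℝ)..t, lam s * dipolePrim a p x s (t - s)| ≤ ∫ s in (0 : ℝ)..t, lam s := by
  rw [← Real.norm_eq_abs]
  refine intervalIntegral.norm_integral_le_of_norm_le ht.le (.of_forall fun s _ => ?_)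
    ((intervalIntegrable_iff_integrableOn_Ioc_of_le ht.le).2 hlam)
  rw [norm_mul, Real.norm_of_nonneg (h.flux_nonneg s)]
  exact mul_le_of_le_one_right (h.flux_nonneg s) (abs_dipolePrim_le_one hx s _)

theorem integral_curve_eq_initial (h : IsExtendedSolution T a fI f p lam)
    (hlam : ∀ t < T, IntegrableOn lam (Ioc 0 t)) (hq : q ∈ Ioo (-1) 1)
    (hpos : ∀ y ∈ Ico (-1) q, 0 ≤ fI y) (hneg : ∀ y ∈ Ioc q 1, fI y ≤ 0) (ht : t ∈ Ioo 0 T) :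
    ∫ z in (-1)..(p t), f z t = ∫ z in (-1)..q, fI z := by
  have hq' := Ioo_subset_Icc_self hq
  have hflux := tendsto_integral_nhdsGT_zero ht.1 (hlam t ht.2)
  have hIoo : ∀ᶠ s in 𝓝[>] (0 : ℝ), s ∈ Ioo 0 T := Ioo_mem_nhdsGT (ht.1.trans ht.2)
  apply le_antisymm
  · have hlim := hflux.const_add (∫ z in (-1)..q, fI z)
    rw [add_zero] at hlim
    refine ge_of_tendsto hlim ?_
    filter_upwards [hIoo] with s hs
    have hps := Ioo_subset_Icc_self (h.curve_mem s)
    rw [h.integral_curve_eq hlam ht hs, h.integral_eq hs (hlam s hs.2) hps]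
    exact add_le_add
      (initialPrim_le_integral_of_sign_change h.continuous_initial hq' hpos hneg hps s)
      ((le_abs_self _).trans (h.abs_integral_flux_mul_dipolePrim_le hs.1 (hlam s hs.2) hps))
  · have hlim := (tendsto_initialPrim h.continuous_initial hq).sub hflux
    rw [sub_zero] at hlim
    refine le_of_tendsto hlim ?_
    filter_upwards [hIoo] with s hs
    have hle := h.integral_le_integral_curve hs hq'
    rw [h.integral_eq hs (hlam s hs.2) hq', ← h.integral_curve_eq hlam ht hs] at hle
    linarith [neg_le_of_abs_le (h.abs_integral_flux_mul_dipolePrim_le hs.1 (hlam s hs.2) hq')]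

theorem integral_total_eq_initial (h : IsExtendedSolution T a fI f p lam) (ht : t ∈ Ioo 0 T)
    (hlam : IntegrableOn lam (Ioc 0 t)) :
    ∫ z in (-1)..1, f z t = ∫ z in (-1)..1, fI z := by
  have hsrc : ∫ s in (0 : ℝ)..t, lam s * dipolePrim a p 1 s (t - s) = 0 := by
    rw [intervalIntegral.integral_of_le ht.1.le, integral_Ioc_eq_integral_Ioo]
    refine setIntegral_eq_zero_of_forall_eq_zero fun s hs => ?_
    have hτ : 0 < t - s := sub_pos.2 hs.2
    rw [dipolePrim, neumannPrim_one _ hτ, neumannPrim_one _ hτ, sub_self, mul_zero]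
  rw [h.integral_eq ht hlam (by norm_num), initialPrim_one fI ht.1, hsrc, add_zero]

end IsExtendedSolution

/-! ### Lipschitz bound for the initial part -/

/-- The function on `ℝ` obtained from `g` on `[-1, 1]` by even reflection at both endpoints,
with `-1` moved to the origin. It is `4`-periodic, which turns the Neumann problem on `[-1, 1]`
into the heat equation on a circle. -/
noncomputable def reflectExtend (g : ℝ → ℝ) (z : ℝ) : ℝ := g (‖(z : AddCircle (4 : ℝ))‖ - 1)

section Reflection

variable {g : ℝ → ℝ} {t : ℝ} {L : NNReal}

theorem reflectExtend_of_abs_le (g : ℝ → ℝ) {z : ℝ} (hz : |z| ≤ 2) :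
    reflectExtend g z = g (|z| - 1) := by
  rw [reflectExtend, (AddCircle.norm_coe_eq_abs_iff 4 (by norm_num)).2]
  norm_num [hz]

theorem reflectExtend_sub_four (g : ℝ → ℝ) (z : ℝ) :
    reflectExtend g (z - 4) = reflectExtend g z := by
  have : ((z - 4 : ℝ) : AddCircle (4 : ℝ)) = z := by
    rw [AddCircle.coe_sub, AddCircle.coe_period, sub_zero]
  rw [reflectExtend, this, reflectExtend]

theorem lipschitzWith_reflectExtend (hg : LipschitzWith L g) :
    LipschitzWith L (reflectExtend g) := by
  refine LipschitzWith.of_dist_le_mul fun z w => (hg.dist_le_mul _ _).trans ?_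
  gcongr
  rw [Real.dist_eq, Real.dist_eq, sub_sub_sub_cancel_right]
  refine (abs_norm_sub_norm_le _ _).trans ?_
  rw [← AddCircle.coe_sub]
  exact QuotientAddGroup.norm_mk_le_norm

theorem continuous_circleHeat (ht : 0 < t) : Continuous fun z => circleHeat z t :=
  continuousOn_circleHeat.comp_continuous (f := fun z : ℝ => (z, t)) (by fun_prop) fun _ => ht

theorem integral_circleHeat (ht : 0 < t) : ∫ z in (-2)..2, circleHeat z t = 1 := by
  rw [intervalIntegral.integral_eq_sub_of_hasDerivAt
    (fun z _ => hasDerivAt_circleHeatPrim z ht)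
    ((continuous_circleHeat ht).intervalIntegrable _ _), circleHeatPrim_neg, circleHeatPrim_two]
  norm_num

theorem initialHeat_eq_integral_circleHeat (hg : Continuous (reflectExtend g)) (x : ℝ)
    (ht : 0 < t) :
    initialHeat g x t = ∫ z in (-2)..2, reflectExtend g (x + 1 - z) * circleHeat z t := by
  have hθ := continuous_circleHeat ht
  set G : ℝ → ℝ := fun w => reflectExtend g w * circleHeat (x + 1 - w) t with hG
  have hGc : Continuous G := hg.mul (hθ.comp (by fun_prop))
  have hright : EqOn (fun y => g y * circleHeat (x - y) t) (fun y => G (y + 1)) (Icc (-1) 1) :=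
    fun y hy => by
      have habs : |y + 1| = y + 1 := abs_of_nonneg (by linarith [hy.1])
      simp only [hG, reflectExtend_of_abs_le g (habs.trans_le (by linarith [hy.2])), habs,
        add_sub_cancel_right, add_sub_add_right_eq_sub]
  have hleft : EqOn (fun y => g y * circleHeat (x + y + 2) t) (fun y => G (-1 - y)) (Icc (-1) 1) :=
    fun y hy => by
      have habs : |-1 - y| = y + 1 := by rw [abs_of_nonpos (by linarith [hy.1])]; ring
      simp only [hG, reflectExtend_of_abs_le g (habs.trans_le (by linarith [hy.2])), habs,
        add_sub_cancel_right]
      ring_nf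
  have hper : Function.Periodic (fun z => reflectExtend g (x + 1 - z) * circleHeat z t) 4 :=
    fun z => by simp only [← sub_sub, reflectExtend_sub_four, circleHeat_add_four]
  have hIcc : uIcc (-1 : ℝ) 1 = Icc (-1) 1 := uIcc_of_le (by norm_num)
  calc initialHeat g x t
      = ∫ y in (-1)..1, (G (y + 1) + G (-1 - y)) := by
        refine intervalIntegral.integral_congr fun y hy => ?_
        rw [hIcc] at hy
        simp only [neumannHeat_of_pos ht, mul_add]
        exact congrArg₂ _ (hright hy) (hleft hy)
    _ = (∫ w in 0..2, G w) + ∫ w in (-2)..0, G w := by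
        rw [intervalIntegral.integral_add (by apply Continuous.intervalIntegrable; fun_prop)
          (by apply Continuous.intervalIntegrable; fun_prop),
          intervalIntegral.integral_comp_add_right, intervalIntegral.integral_comp_sub_left]
        norm_num
    _ = ∫ w in (-2)..2, G w := by
        rw [add_comm, intervalIntegral.integral_add_adjacent_intervals] <;>
          exact hGc.intervalIntegrable _ _
    _ = ∫ z in (x - 1)..(x - 1 + 4), reflectExtend g (x + 1 - z) * circleHeat z t := by
        have := intervalIntegral.integral_comp_sub_left (a := -2) (b := 2)
          (fun z => reflectExtend g (x + 1 - z) * circleHeat z t) (x + 1)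
        simp only [sub_sub_cancel] at this
        rw [hG, this]
        ring_nf
    _ = ∫ z in (-2)..2, reflectExtend g (x + 1 - z) * circleHeat z t := by
        rw [hper.intervalIntegral_add_eq (x - 1) (-2)]
        norm_num

theorem abs_initialHeat_sub_le (hg : LipschitzWith L g) (x x' : ℝ) (ht : 0 < t) :
    |initialHeat g x t - initialHeat g x' t| ≤ L * |x - x'| := by
  have hR := lipschitzWith_reflectExtend hg
  have hθ := continuous_circleHeat ht
  have hint : ∀ x, IntervalIntegrable (fun z => reflectExtend g (x + 1 - z) * circleHeat z t)
      volume (-2) 2 := fun x =>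
    ((hR.continuous.comp (continuous_const.sub continuous_id)).mul hθ).intervalIntegrable _ _
  calc |initialHeat g x t - initialHeat g x' t|
      = ‖∫ z in (-2)..2,
          (reflectExtend g (x + 1 - z) - reflectExtend g (x' + 1 - z)) * circleHeat z t‖ := by
        simp only [sub_mul, intervalIntegral.integral_sub (hint x) (hint x'), Real.norm_eq_abs,
          initialHeat_eq_integral_circleHeat hR.continuous _ ht]
    _ ≤ ∫ z in (-2)..2, L * |x - x'| * circleHeat z t := by
        refine intervalIntegral.norm_integral_le_of_norm_le (by norm_num)
          (.of_forall fun z _ => ?_) ((hθ.const_mul _).intervalIntegrable _ _)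
        rw [norm_mul, Real.norm_of_nonneg (circleHeat_nonneg z ht)]
        refine mul_le_mul_of_nonneg_right ?_ (circleHeat_nonneg z ht)
        simpa [Real.dist_eq] using hR.dist_le_mul (x + 1 - z) (x' + 1 - z)
    _ = L * |x - x'| := by
        rw [intervalIntegral.integral_const_mul, integral_circleHeat ht, mul_one]

end Reflection

theorem abs_le_of_hasDerivAt_of_frequently {g : ℝ → ℝ} {d q C : ℝ} (hg : HasDerivAt g d q)
    (h : ∃ᶠ x in 𝓝[≠] q, |g x - g q| ≤ C * |x - q|) : |d| ≤ C := by
  refine le_of_tendsto_of_frequently (hasDerivAt_iff_tendsto_slope.1 hg).abs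
    ((h.and_eventually self_mem_nhdsWithin).mono fun x hx => ?_)
  have hpos : 0 < |x - q| := abs_pos.2 (sub_ne_zero.2 hx.2)
  rw [slope_def_field, abs_div, div_le_iff₀ hpos]
  exact hx.1

namespace IsExtendedSolution

variable {T a t : ℝ} {fI : ℝ → ℝ} {f : ℝ → ℝ → ℝ} {p lam : ℝ → ℝ} {L : NNReal}

/-- Where the Duhamel integral diverges, it takes the junk value `0`, so that `f` coincides with
`initialHeat` along a sequence approaching the free boundary. -/
theorem flux_le_of_frequently_not_integrable (h : IsExtendedSolution T a fI f p lam)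
    (hL : LipschitzWith L fI) (ht : t ∈ Ioo 0 T)
    (hbad : ∃ᶠ x in 𝓝[≠] (p t),
      ¬ IntervalIntegrable (fun s => lam s * dipoleHeat a p x s (t - s)) volume 0 t) :
    lam t ≤ L := by
  have hmem : ∀ᶠ x in 𝓝[≠] (p t), x ∈ Icc (-1) 1 :=
    nhdsWithin_le_nhds (Icc_mem_nhds (h.curve_mem t).1 (h.curve_mem t).2)
  have heq : ∃ᶠ x in 𝓝[≠] (p t), f x t = initialHeat fI x t :=
    (hbad.and_eventually hmem).mono fun x hx => by
      rw [h.duhamel t ht x hx.2, intervalIntegral.integral_undef hx.1, add_zero]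
  have hcurve : f (p t) t = initialHeat fI (p t) t := by
    have hlim := ((h.hasDerivAt_curve t ht).continuousAt.tendsto.sub
      (continuous_initialHeat h.continuous_initial t).continuousAt.tendsto).mono_left
        (nhdsWithin_le_nhds (s := {p t}ᶜ))
    have hzero := isClosed_singleton.mem_of_frequently_of_tendsto
      (heq.mono fun x hx => mem_singleton_iff.2 (sub_eq_zero.2 hx)) hlim
    exact sub_eq_zero.1 (mem_singleton_iff.1 hzero)
  have hslope := abs_le_of_hasDerivAt_of_frequently (h.hasDerivAt_curve t ht)
    (heq.mono fun x hx => by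
      rw [hx, hcurve]
      exact abs_initialHeat_sub_le hL x (p t) ht.1)
  exact (le_abs_self _).trans ((abs_neg _).ge.trans hslope)

theorem integrableOn_flux_of_forall_frequently_not_integrable
    (h : IsExtendedSolution T a fI f p lam) (hL : LipschitzWith L fI)
    (hbad : ∀ t ∈ Ioo 0 T, ∃ᶠ x in 𝓝[≠] (p t),
      ¬ IntervalIntegrable (fun s => lam s * dipoleHeat a p x s (t - s)) volume 0 t)
    (ht : t < T) : IntegrableOn lam (Ioc 0 t) := by
  refine Measure.integrableOn_of_bounded (M := L) (by simp) h.aestronglyMeasurable_flux ?_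
  filter_upwards [ae_restrict_mem measurableSet_Ioc] with s hs
  have hs' : s ∈ Ioo 0 T := ⟨hs.1, hs.2.trans_lt ht⟩
  rw [Real.norm_of_nonneg (h.flux_nonneg s)]
  exact h.flux_le_of_frequently_not_integrable hL hs' (hbad s hs')

end IsExtendedSolution

/-! ### Cosine series with rapidly decaying coefficients -/

theorem integral_cos_int_mul_pi_div_two_mul_add_one {m : ℤ} (hm : m ≠ 0) :
    ∫ x in (-1 : ℝ)..1, Real.cos (m * (Real.pi / 2) * (x + 1)) = 0 := by
  have : (m : ℝ) * (Real.pi / 2) ≠ 0 :=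
    mul_ne_zero (Int.cast_ne_zero.2 hm) (half_pos Real.pi_pos).ne'
  have hderiv (x : ℝ) : HasDerivAt
      (fun x => Real.sin (m * (Real.pi / 2) * (x + 1)) / (m * (Real.pi / 2)))
      (Real.cos (m * (Real.pi / 2) * (x + 1))) x := by
    refine (((((hasDerivAt_id' x).add_const 1).const_mul
      (m * (Real.pi / 2))).sin).div_const (m * (Real.pi / 2))).congr_deriv ?_
    field_simp
  rw [intervalIntegral.integral_eq_sub_of_hasDerivAt (fun x _ => hderiv x)
      (Continuous.intervalIntegrable (by fun_prop) _ _),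
    show (m : ℝ) * (Real.pi / 2) * (1 + 1) = m * Real.pi by ring, Real.sin_int_mul_pi]
  simp

theorem integral_cos_heatFreq_mul_cos_heatFreq (n m : ℕ) :
    ∫ x in (-1 : ℝ)..1, Real.cos (heatFreq n * (x + 1)) * Real.cos (heatFreq m * (x + 1)) =
      if n = m then 1 else 0 := by
  have product_to_sum (x : ℝ) :
      Real.cos (heatFreq n * (x + 1)) * Real.cos (heatFreq m * (x + 1)) =
        Real.cos (((n : ℤ) - m : ℤ) * (Real.pi / 2) * (x + 1)) / 2 +
          Real.cos (((n : ℤ) + m + 2 : ℤ) * (Real.pi / 2) * (x + 1)) / 2 := by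
    rw [show (((n : ℤ) - m : ℤ) : ℝ) * (Real.pi / 2) * (x + 1) =
          heatFreq n * (x + 1) - heatFreq m * (x + 1) by unfold heatFreq; push_cast; ring,
      show (((n : ℤ) + m + 2 : ℤ) : ℝ) * (Real.pi / 2) * (x + 1) =
          heatFreq n * (x + 1) + heatFreq m * (x + 1) by unfold heatFreq; push_cast; ring,
      Real.cos_sub, Real.cos_add]
    ring
  simp_rw [product_to_sum]
  rw [intervalIntegral.integral_add (Continuous.intervalIntegrable (by fun_prop) _ _)
      (Continuous.intervalIntegrable (by fun_prop) _ _), intervalIntegral.integral_div,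
    intervalIntegral.integral_div,
    integral_cos_int_mul_pi_div_two_mul_add_one (m := n + m + 2) (by lia)]
  split_ifs with h
  · simp [h]
  · rw [integral_cos_int_mul_pi_div_two_mul_add_one (m := n - m) (by lia), zero_div, zero_add]

theorem norm_complex_cos_le_exp_abs_im (z : ℂ) : ‖Complex.cos z‖ ≤ Real.exp |z.im| := by
  have hpos : ‖Complex.exp (z * Complex.I)‖ ≤ Real.exp |z.im| := by
    rw [Complex.norm_exp, Complex.mul_I_re]
    exact Real.exp_le_exp.2 (neg_le_abs _)
  have hneg : ‖Complex.exp (-z * Complex.I)‖ ≤ Real.exp |z.im| := by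
    rw [Complex.norm_exp, Complex.mul_I_re, Complex.neg_im, neg_neg]
    exact Real.exp_le_exp.2 (le_abs_self _)
  rw [Complex.cos, norm_div, Complex.norm_two]
  linarith [norm_add_le (Complex.exp (z * Complex.I)) (Complex.exp (-z * Complex.I))]

/-- The non-constant part of a Neumann Fourier series on `[-1, 1]`; the coefficient `b n` belongs
to the frequency `heatFreq n`. -/
noncomputable def cosSeries (b : ℕ → ℝ) (x : ℝ) : ℝ :=
  ∑' n, b n * Real.cos (heatFreq n * (x + 1))

section CosSeries

variable {b β : ℕ → ℝ}

theorem norm_mul_cos_le {r c : ℝ} (h : |r| ≤ c) (θ : ℝ) : ‖r * Real.cos θ‖ ≤ c := by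
  rw [norm_mul]
  exact (mul_le_of_le_one_right (norm_nonneg _) (Real.abs_cos_le_one θ)).trans h

theorem abs_cosSeries_le (hβ : Summable β) (hb : ∀ n, |b n| ≤ β n) (x : ℝ) :
    |cosSeries b x| ≤ ∑' n, β n :=
  tsum_of_norm_bounded hβ.hasSum fun n => norm_mul_cos_le (hb n) _

theorem analyticOnNhd_cosSeries (hβ : Summable fun n => β n * Real.exp (heatFreq n))
    (hb : ∀ n, |b n| ≤ β n) : AnalyticOnNhd ℝ (cosSeries b) univ := by
  set strip : Set ℂ := {z | |z.im| < 1}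
  have hopen : IsOpen strip := isOpen_lt (by fun_prop) continuous_const
  set F : ℂ → ℂ := fun z => ∑' n, (b n : ℂ) * Complex.cos (heatFreq n * (z + 1))
  have hF : DifferentiableOn ℂ F strip := by
    refine Complex.differentiableOn_tsum_of_summable_norm hβ (fun n => by fun_prop) hopen
      fun n z hz => ?_
    rw [norm_mul, Complex.norm_real]
    refine mul_le_mul (hb n) ((norm_complex_cos_le_exp_abs_im _).trans (Real.exp_le_exp.2 ?_))
      (norm_nonneg _) ((abs_nonneg _).trans (hb n))
    rw [Complex.im_ofReal_mul, Complex.add_im, Complex.one_im, add_zero, abs_mul,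
      abs_of_pos (heatFreq_pos n)]
    exact mul_le_of_le_one_right (heatFreq_pos n).le (le_of_lt hz)
  have hre : cosSeries b = fun x : ℝ => (F x).re := by
    funext x
    have hcast : F x = (cosSeries b x : ℂ) := by
      simp only [F, cosSeries, Complex.ofReal_tsum, Complex.ofReal_mul, Complex.ofReal_cos,
        Complex.ofReal_add, Complex.ofReal_one]
    rw [hcast, Complex.ofReal_re]
  intro x _
  rw [hre]
  exact (hF.analyticOnNhd hopen x (by simp [strip])).re_ofReal

theorem coeff_eq_zero_of_cosSeries_eq_zero (hβ : Summable β) (hb : ∀ n, |b n| ≤ β n)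
    (hzero : ∀ x, cosSeries b x = 0) (m : ℕ) : b m = 0 := by
  have hterms (x : ℝ) : HasSum
      (fun n => b n * Real.cos (heatFreq n * (x + 1)) * Real.cos (heatFreq m * (x + 1))) 0 := by
    have hsum : HasSum (fun n => b n * Real.cos (heatFreq n * (x + 1))) (cosSeries b x) :=
      (Summable.of_norm_bounded hβ fun n => norm_mul_cos_le (hb n) _).hasSum
    simpa only [hzero, zero_mul] using hsum.mul_right (Real.cos (heatFreq m * (x + 1)))
  have hint : HasSum (fun n => ∫ x in (-1 : ℝ)..1,
      b n * Real.cos (heatFreq n * (x + 1)) * Real.cos (heatFreq m * (x + 1)))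
      (∫ _ in (-1 : ℝ)..1, 0) :=
    intervalIntegral.hasSum_integral_of_dominated_convergence (fun n _ => β n)
      (fun n => Continuous.aestronglyMeasurable (by fun_prop))
      (fun n => .of_forall fun x _ => norm_mul_cos_le (norm_mul_cos_le (hb n) _) _)
      (.of_forall fun _ _ => hβ) (by simp) (.of_forall fun x _ => hterms x)
  have hcoeff (n : ℕ) : ∫ x in (-1 : ℝ)..1,
      b n * Real.cos (heatFreq n * (x + 1)) * Real.cos (heatFreq m * (x + 1)) =
        if n = m then b m else 0 := by
    simp_rw [mul_assoc]
    rw [intervalIntegral.integral_const_mul, integral_cos_heatFreq_mul_cos_heatFreq]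
    split_ifs with h <;> simp [h]
  simp_rw [hcoeff, intervalIntegral.integral_zero] at hint
  exact (hasSum_ite_eq m (b m)).unique hint

theorem coeff_eq_zero_of_frequently_cosSeries_eq_zero
    (hβ : Summable fun n => β n * Real.exp (heatFreq n)) (hb : ∀ n, |b n| ≤ β n) {x₀ : ℝ}
    (h : ∃ᶠ x in 𝓝[≠] x₀, cosSeries b x = 0) (m : ℕ) : b m = 0 := by
  have hβ' : Summable β := hβ.of_nonneg_of_le (fun n => (abs_nonneg _).trans (hb n)) fun n =>
    le_mul_of_one_le_right ((abs_nonneg _).trans (hb n)) (Real.one_le_exp (heatFreq_pos n).le)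
  have hzero := (analyticOnNhd_cosSeries hβ hb).eqOn_zero_of_preconnected_of_frequently_eq_zero
    isPreconnected_univ (mem_univ x₀) h
  exact coeff_eq_zero_of_cosSeries_eq_zero hβ' hb (fun x => hzero (mem_univ x)) m

/-- The coefficient sequences dominated by `β` whose first entry is at least `e`. -/
def coeffBox (β : ℕ → ℝ) (e : ℝ) : Set (ℕ → ℝ) := {b | (∀ n, |b n| ≤ β n) ∧ e ≤ b 0}

theorem isCompact_coeffBox (β : ℕ → ℝ) (e : ℝ) : IsCompact (coeffBox β e) := by
  have hbox : coeffBox β e = (univ.pi fun n => Icc (-β n) (β n)) ∩ {b | e ≤ b 0} := by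
    ext b
    simp only [coeffBox, mem_ofPred_eq, mem_inter_iff, mem_univ_pi, mem_Icc, abs_le]
  rw [hbox]
  exact (isCompact_univ_pi fun _ => isCompact_Icc).inter_right
    (isClosed_le continuous_const (continuous_apply 0))

theorem continuousOn_cosSeries_coeffBox (hβ : Summable β) (e x : ℝ) :
    ContinuousOn (fun b => cosSeries b x) (coeffBox β e) :=
  continuousOn_tsum (fun n => by fun_prop) hβ fun n _ hb => norm_mul_cos_le (hb.1 n) _

theorem exists_finset_le_sum_abs_cosSeries {e : ℝ} (he : 0 < e)
    (hβ : Summable fun n => β n * Real.exp (heatFreq n)) {x₀ : ℝ} {A : Set ℝ}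
    (hA : A ∈ 𝓝[≠] x₀) :
    ∃ F : Finset ℝ, (∀ x ∈ F, x ∈ A) ∧
      ∃ c, 0 < c ∧ ∀ b ∈ coeffBox β e, c ≤ ∑ x ∈ F, |cosSeries b x| := by
  classical
  refine (isCompact_coeffBox β e).induction_on (p := fun S => ∃ F : Finset ℝ, (∀ x ∈ F, x ∈ A) ∧
    ∃ c, 0 < c ∧ ∀ b ∈ S, c ≤ ∑ x ∈ F, |cosSeries b x|) ?_ ?_ ?_ ?_
  · exact ⟨∅, by simp, 1, one_pos, by simp⟩
  · rintro S S' hS ⟨F, hFA, c, hc, hle⟩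
    exact ⟨F, hFA, c, hc, fun b hb => hle b (hS hb)⟩
  · rintro S S' ⟨F, hFA, c, hc, hle⟩ ⟨F', hFA', c', hc', hle'⟩
    refine ⟨F ∪ F', fun x hx => (Finset.mem_union.1 hx).elim (hFA x) (hFA' x), min c c',
      lt_min hc hc', ?_⟩
    rintro b (hb | hb)
    · exact (min_le_left _ _).trans <| (hle b hb).trans <|
        Finset.sum_le_sum_of_subset_of_nonneg Finset.subset_union_left fun _ _ _ => abs_nonneg _
    · exact (min_le_right _ _).trans <| (hle' b hb).trans <|
        Finset.sum_le_sum_of_subset_of_nonneg Finset.subset_union_right fun _ _ _ => abs_nonneg _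
  · intro b hb
    obtain ⟨x, hxA, hx⟩ : ∃ x ∈ A, cosSeries b x ≠ 0 := by
      by_contra! hzero
      have := coeff_eq_zero_of_frequently_cosSeries_eq_zero hβ hb.1
        (Eventually.frequently (mem_of_superset hA hzero)) 0
      linarith [hb.2]
    have hpos : 0 < |cosSeries b x| := abs_pos.2 hx
    refine ⟨_, (continuousOn_cosSeries_coeffBox ?_ e x).abs b hb |>.eventually
      (lt_mem_nhds (half_lt_self hpos)), {x}, by simpa using hxA, _, half_pos hpos, ?_⟩
    · have hβ0 (n : ℕ) : 0 ≤ β n := (abs_nonneg _).trans (hb.1 n)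
      exact hβ.of_nonneg_of_le hβ0 fun n =>
        le_mul_of_one_le_right (hβ0 n) (Real.one_le_exp (heatFreq_pos n).le)
    · intro b' hb'
      simpa only [Finset.sum_singleton] using le_of_lt hb'

end CosSeries

/-! ### Degeneration of the dipole near the ends of the interval -/

theorem abs_sin_nat_mul_le (n : ℕ) (x : ℝ) : |Real.sin (n * x)| ≤ n * |Real.sin x| := by
  induction n with
  | zero => simp
  | succ n ih =>
    calc |Real.sin ((n + 1 : ℕ) * x)|
        = |Real.sin (n * x) * Real.cos x + Real.cos (n * x) * Real.sin x| := by
          rw [← Real.sin_add]; push_cast; ring_nf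
      _ ≤ |Real.sin (n * x)| * |Real.cos x| + |Real.cos (n * x)| * |Real.sin x| := by
          rw [← abs_mul, ← abs_mul]; exact abs_add_le _ _
      _ ≤ n * |Real.sin x| * 1 + 1 * |Real.sin x| := by
          gcongr <;> exact Real.abs_cos_le_one _
      _ = (n + 1 : ℕ) * |Real.sin x| := by push_cast; ring

theorem abs_sin_heatFreq_mul_le (n : ℕ) (y : ℝ) :
    |Real.sin (heatFreq n * y)| ≤ heatFreq n * |Real.sin (heatFreq 0 * y)| := by
  have hfreq : heatFreq n * y = (n + 1 : ℕ) * (heatFreq 0 * y) := by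
    unfold heatFreq; push_cast; ring
  rw [hfreq]
  refine (abs_sin_nat_mul_le _ _).trans (mul_le_mul_of_nonneg_right ?_ (abs_nonneg _))
  exact_mod_cast add_one_le_heatFreq n

theorem le_sin_heatFreq_zero_mul {m y : ℝ} (h₀ : 0 ≤ m) (h₁ : m ≤ y) (h₂ : y ≤ 2 - m) :
    m ≤ Real.sin (heatFreq 0 * y) := by
  have hsin {z : ℝ} (hz₀ : 0 ≤ z) (hz₁ : z ≤ 1) : z ≤ Real.sin (heatFreq 0 * z) := by
    have hfreq : heatFreq 0 * z = Real.pi / 2 * z := by simp [heatFreq]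
    have hpi := half_pos Real.pi_pos
    have h := Real.mul_le_sin (x := Real.pi / 2 * z) (mul_nonneg hpi.le hz₀)
      (mul_le_of_le_one_right hpi.le hz₁)
    rw [hfreq]
    exact (by field_simp : z = 2 / Real.pi * (Real.pi / 2 * z)).le.trans h
  rcases le_total y 1 with h | h
  · exact h₁.trans (hsin (h₀.trans h₁) h)
  · have hreflect : heatFreq 0 * y = Real.pi - heatFreq 0 * (2 - y) := by
      simp only [heatFreq, Nat.cast_zero]; ring
    rw [hreflect, Real.sin_pi_sub]
    exact (by linarith : m ≤ 2 - y).trans (hsin (by linarith) (by linarith))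

/-- The `n`-th cosine coefficient of the dipole at time `s` (before any heat flow). For `n = 0` it
is comparable to `ā(s)²` and measures how much the dipole degenerates when the free boundary
approaches an end of the interval. -/
noncomputable def dipoleCoeff (a : ℝ) (p : ℝ → ℝ) (n : ℕ) (s : ℝ) : ℝ :=
  Real.cos (heatFreq n * (leftSource a p s + 1)) - Real.cos (heatFreq n * (rightSource a p s + 1))

theorem measurable_dipoleCoeff {p : ℝ → ℝ} (hp : Measurable p) (a : ℝ) (n : ℕ) :
    Measurable (dipoleCoeff a p n) := by
  have hl := measurable_leftSource (a := a) hp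
  have hr := measurable_rightSource (a := a) hp
  unfold dipoleCoeff
  fun_prop

theorem dipoleCoeff_eq_two_mul_sin_mul_sin (a : ℝ) (p : ℝ → ℝ) (n : ℕ) (s : ℝ) :
    dipoleCoeff a p n s =
      2 * Real.sin (heatFreq n * (p s + 1)) * Real.sin (heatFreq n * abar a p s) := by
  rw [dipoleCoeff, Real.cos_sub_cos,
    show (heatFreq n * (leftSource a p s + 1) + heatFreq n * (rightSource a p s + 1)) / 2 =
      heatFreq n * (p s + 1) by unfold leftSource rightSource; ring,
    show (heatFreq n * (leftSource a p s + 1) - heatFreq n * (rightSource a p s + 1)) / 2 =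
      -(heatFreq n * abar a p s) by unfold leftSource rightSource; ring, Real.sin_neg]
  ring

theorem hasSum_circleHeat (z : ℝ) {τ : ℝ} (hτ : 0 < τ) :
    HasSum (fun n => heatMode n τ * Real.cos (heatFreq n * z) / 2) (circleHeat z τ - 1 / 4) := by
  rw [circleHeat, add_sub_cancel_left]
  exact (Summable.of_norm_bounded (summable_heatFreq_mul_heatMode hτ)
    fun n => norm_circleHeat_term_le n z le_rfl).hasSum

theorem hasSum_neumannHeat (x y : ℝ) {τ : ℝ} (hτ : 0 < τ) :
    HasSum (fun n => heatMode n τ * Real.cos (heatFreq n * (y + 1)) *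
      Real.cos (heatFreq n * (x + 1))) (neumannHeat x y τ - 1 / 2) := by
  convert (hasSum_circleHeat (x - y) hτ).add (hasSum_circleHeat (x + y + 2) hτ) using 1
  · funext n
    rw [show heatFreq n * (x - y) = heatFreq n * (x + 1) - heatFreq n * (y + 1) by ring,
      show heatFreq n * (x + y + 2) = heatFreq n * (x + 1) + heatFreq n * (y + 1) by ring,
      Real.cos_sub, Real.cos_add]
    ring
  · rw [neumannHeat_of_pos hτ]
    ring

theorem dipoleHeat_eq_cosSeries (a : ℝ) (p : ℝ → ℝ) (x s : ℝ) {τ : ℝ} (hτ : 0 < τ) :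
    dipoleHeat a p x s τ = cosSeries (fun n => heatMode n τ * dipoleCoeff a p n s) x := by
  have h := (hasSum_neumannHeat x (leftSource a p s) hτ).sub
    (hasSum_neumannHeat x (rightSource a p s) hτ)
  rw [sub_sub_sub_cancel_right] at h
  rw [dipoleHeat, cosSeries, ← h.tsum_eq]
  refine tsum_congr fun n => ?_
  unfold dipoleCoeff
  ring

theorem abs_add_sub_two_mul_le {F F' F'' : ℝ → ℝ} {C z r : ℝ} (hr : 0 ≤ r)
    (hF : ∀ y, HasDerivAt F (F' y) y) (hF' : ∀ y, HasDerivAt F' (F'' y) y)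
    (hC : ∀ y ∈ Icc (z - r) (z + r), |F'' y| ≤ C) :
    |F (z + r) + F (z - r) - 2 * F z| ≤ 2 * C * r ^ 2 := by
  have hC₀ : 0 ≤ C := (abs_nonneg _).trans (hC z ⟨by linarith, by linarith⟩)
  have hderiv (σ : ℝ) : HasDerivAt (fun σ => F (z + σ) + F (z - σ)) (F' (z + σ) - F' (z - σ)) σ :=
    ((hF (z + σ)).comp_const_add z σ).add ((hF (z - σ)).comp_const_sub z σ)
  have hslope : ∀ σ ∈ Icc 0 r, ‖F' (z + σ) - F' (z - σ)‖ ≤ 2 * C * r := fun σ hσ => by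
    refine ((convex_Icc (z - r) (z + r)).norm_image_sub_le_of_norm_hasDerivWithin_le
      (fun y _ => (hF' y).hasDerivWithinAt) hC (x := z - σ) (y := z + σ)
      ⟨by linarith [hσ.2], by linarith [hσ.1]⟩ ⟨by linarith [hσ.1], by linarith [hσ.2]⟩).trans ?_
    rw [add_sub_sub_cancel, Real.norm_of_nonneg (by linarith [hσ.1])]
    nlinarith [hσ.2]
  have h := (convex_Icc 0 r).norm_image_sub_le_of_norm_hasDerivWithin_le
    (fun σ _ => (hderiv σ).hasDerivWithinAt) hslope (left_mem_Icc.2 hr) (right_mem_Icc.2 hr)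
  rw [sub_zero, sub_zero, add_zero, Real.norm_of_nonneg hr] at h
  rw [two_mul (F z)]
  exact h.trans_eq (by ring)

section DipoleBounds

variable {a s τ : ℝ} {p : ℝ → ℝ}

theorem two_mul_abar_sq_le_dipoleCoeff_zero (ha : 0 < a) (hp : p s ∈ Ioo (-1) 1) :
    2 * abar a p s ^ 2 ≤ dipoleCoeff a p 0 s := by
  have h₀ := (abar_pos ha hp).le
  have h₁ := abar_le_one_sub a p s
  have h₂ := abar_le_one_add a p s
  rw [dipoleCoeff_eq_two_mul_sin_mul_sin, sq, ← mul_assoc]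
  have hcurve : abar a p s ≤ Real.sin (heatFreq 0 * (p s + 1)) :=
    le_sin_heatFreq_zero_mul h₀ (by linarith) (by linarith)
  have hwidth : abar a p s ≤ Real.sin (heatFreq 0 * abar a p s) :=
    le_sin_heatFreq_zero_mul h₀ le_rfl (by linarith)
  have := h₀.trans hcurve
  gcongr

theorem dipoleCoeff_zero_pos (ha : 0 < a) (hp : p s ∈ Ioo (-1) 1) : 0 < dipoleCoeff a p 0 s :=
  (mul_pos two_pos (pow_pos (abar_pos ha hp) 2)).trans_le
    (two_mul_abar_sq_le_dipoleCoeff_zero ha hp)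

theorem abs_dipoleCoeff_le (ha : 0 < a) (hp : p s ∈ Ioo (-1) 1) (n : ℕ) :
    |dipoleCoeff a p n s| ≤ heatFreq n ^ 2 * dipoleCoeff a p 0 s := by
  rw [← abs_of_pos (dipoleCoeff_zero_pos ha hp)]
  simp only [dipoleCoeff_eq_two_mul_sin_mul_sin, abs_mul, abs_two]
  have h := mul_le_mul (abs_sin_heatFreq_mul_le n (p s + 1))
    (abs_sin_heatFreq_mul_le n (abar a p s)) (abs_nonneg _)
    (mul_nonneg (heatFreq_pos n).le (abs_nonneg _))
  linarith

theorem abs_heatMode_mul_dipoleCoeff_le (ha : 0 < a) (hp : p s ∈ Ioo (-1) 1) {δ : ℝ} (hτ : δ ≤ τ)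
    (n : ℕ) : |heatMode n τ * dipoleCoeff a p n s| ≤
      heatFreq n ^ 2 * heatMode n δ * dipoleCoeff a p 0 s := by
  rw [abs_mul, abs_of_pos (heatMode_pos n τ), mul_right_comm, mul_comm]
  exact mul_le_mul (abs_dipoleCoeff_le ha hp n) (heatMode_antitone n hτ) (heatMode_pos n τ).le
    ((abs_nonneg _).trans (abs_dipoleCoeff_le ha hp n))

theorem exists_abs_dipoleHeat_le (ha : 0 < a) (hp : ∀ s, p s ∈ Ioo (-1) 1) {δ : ℝ} (hδ : 0 < δ) :
    ∃ B, 0 ≤ B ∧ ∀ x s τ, δ ≤ τ → |dipoleHeat a p x s τ| ≤ B * dipoleCoeff a p 0 s := by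
  refine ⟨∑' n, heatFreq n ^ 2 * heatMode n δ, tsum_nonneg fun n =>
    mul_nonneg (sq_nonneg _) (heatMode_pos n δ).le, fun x s τ hτ => ?_⟩
  rw [dipoleHeat_eq_cosSeries a p x s (hδ.trans_le hτ), ← tsum_mul_right]
  exact abs_cosSeries_le ((summable_heatFreq_pow_mul_heatMode 2 hδ).mul_right _)
    (abs_heatMode_mul_dipoleCoeff_le ha (hp s) hτ) x

theorem dipolePrim_of_abar_eq_one_add (h : abar a p s = 1 + p s) (x : ℝ) (hτ : 0 < τ) :
    dipolePrim a p x s τ = -(circleHeatPrim (1 + x + 2 * abar a p s) τ +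
      circleHeatPrim (1 + x - 2 * abar a p s) τ - 2 * circleHeatPrim (1 + x) τ) := by
  rw [dipolePrim, neumannPrim_of_pos hτ, neumannPrim_of_pos hτ, leftSource, rightSource,
    show p s = abar a p s - 1 by linarith]
  ring_nf

theorem dipolePrim_of_abar_eq_one_sub (h : abar a p s = 1 - p s) (x : ℝ) (hτ : 0 < τ) :
    dipolePrim a p x s τ = -(circleHeatPrim (1 - x + 2 * abar a p s) τ +
      circleHeatPrim (1 - x - 2 * abar a p s) τ - 2 * circleHeatPrim (1 - x) τ) := by
  have hodd (z : ℝ) : circleHeatPrim (-z) τ = -circleHeatPrim z τ := circleHeatPrim_neg z τ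
  have hperiod (z : ℝ) : circleHeatPrim (z + 4) τ = circleHeatPrim z τ + 1 :=
    circleHeatPrim_add_four z τ
  set r := abar a p s with hr
  rw [dipolePrim, neumannPrim_of_pos hτ, neumannPrim_of_pos hτ, leftSource, rightSource, ← hr,
    show p s = 1 - r by linarith,
    show x - (1 - r - r) = -(1 - x - 2 * r) by ring,
    show x + (1 - r - r) + 2 = -(1 - x + 2 * r) + 4 by ring,
    show x - (1 - r + r) = -(1 - x) by ring,
    show x + (1 - r + r) + 2 = -(1 - x) + 4 by ring]
  simp only [hodd, hperiod]
  ring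

theorem exists_circleHeatPrim_second_difference_le {ρ : ℝ} (hρ : 0 < ρ) :
    ∃ C, 0 ≤ C ∧ ∀ z ∈ Icc (3 * ρ) 2, ∀ r ∈ Icc 0 (2 * ρ), ∀ τ, 0 < τ → τ ≤ 1 →
      |circleHeatPrim (z + r) τ + circleHeatPrim (z - r) τ - 2 * circleHeatPrim z τ|
        ≤ C * r ^ 2 := by
  obtain ⟨C, hC, hderiv⟩ := exists_circleHeat_le_mul_time hρ
  refine ⟨2 * C, by positivity, fun z hz r hr τ hτ hτ₁ => ?_⟩
  refine abs_add_sub_two_mul_le hr.1 (fun y => hasDerivAt_circleHeatPrim y hτ)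
    (fun y => hasDerivAt_circleHeat y hτ) fun y hy => ?_
  exact (hderiv y ⟨by linarith [hy.1, hz.1, hr.2], by linarith [hy.2, hz.1, hz.2, hr.2]⟩ τ hτ
    hτ₁).2.trans (mul_le_of_le_one_right hC hτ₁)

/- Either the sources are well inside the interval, and `dipolePrim` is bounded, or one source sits
exactly at an end point; it then coincides with its mirror image, so that `dipolePrim` is a second
difference with step `2 ā`. -/
theorem exists_abs_dipolePrim_le (ha : 0 < a) (hp : ∀ s, p s ∈ Ioo (-1) 1) {x : ℝ}
    (hx : x ∈ Ioo (-1) 1) :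
    ∃ C, ∀ s τ, 0 < τ → τ ≤ 1 → |dipolePrim a p x s τ| ≤ C * dipoleCoeff a p 0 s := by
  obtain ⟨ρ, hρ, hρmin⟩ : ∃ ρ > 0, ρ < min (3 * a) (min (1 - x) (1 + x)) / 3 :=
    exists_between (by
      have := hx.1
      have := hx.2
      exact div_pos (lt_min (by positivity) (lt_min (by linarith) (by linarith))) three_pos)
  obtain ⟨hρa, hρsub, hρadd⟩ : ρ < a ∧ 3 * ρ < 1 - x ∧ 3 * ρ < 1 + x := by
    rw [lt_div_iff₀ three_pos, lt_min_iff, lt_min_iff] at hρmin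
    exact ⟨by linarith [hρmin.1], by linarith [hρmin.2.1], by linarith [hρmin.2.2]⟩
  obtain ⟨C, hC, hdiff⟩ := exists_circleHeatPrim_second_difference_le hρ
  refine ⟨2 * C + 1 / (2 * ρ ^ 2), fun s τ hτ hτ₁ => ?_⟩
  have hcoeff := two_mul_abar_sq_le_dipoleCoeff_zero ha (hp s)
  have habar := abar_pos ha (hp s)
  rw [add_mul]
  rcases le_or_gt ρ (abar a p s) with hfar | hnear
  · refine (abs_dipolePrim_le_one (Ioo_subset_Icc_self hx) s τ).trans ?_
    have hsq : ρ ^ 2 ≤ abar a p s ^ 2 := by gcongr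
    have hone : 1 ≤ 1 / (2 * ρ ^ 2) * dipoleCoeff a p 0 s := by
      rw [one_div_mul_eq_div, one_le_div₀ (by positivity)]
      linarith
    linarith [mul_nonneg (mul_nonneg two_pos.le hC) (dipoleCoeff_zero_pos ha (hp s)).le]
  · have hstep : 2 * abar a p s ∈ Icc 0 (2 * ρ) := ⟨by linarith, by linarith⟩
    have hprim : |dipolePrim a p x s τ| ≤ C * (2 * abar a p s) ^ 2 := by
      have hends : abar a p s = 1 - p s ∨ abar a p s = 1 + p s := by
        rcases min_choice a (min (1 - p s) (1 + p s)) with h | h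
        · exact absurd (h : abar a p s = a) (hnear.trans hρa).ne
        · exact (min_choice (1 - p s) (1 + p s)).imp h.trans h.trans
      rcases hends with h | h
      · rw [dipolePrim_of_abar_eq_one_sub h x hτ, abs_neg]
        exact hdiff _ ⟨hρsub.le, by linarith [hx.1]⟩ _ hstep τ hτ hτ₁
      · rw [dipolePrim_of_abar_eq_one_add h x hτ, abs_neg]
        exact hdiff _ ⟨hρadd.le, by linarith [hx.2]⟩ _ hstep τ hτ hτ₁
    have hnonneg : 0 ≤ 1 / (2 * ρ ^ 2) * dipoleCoeff a p 0 s :=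
      mul_nonneg (by positivity) (dipoleCoeff_zero_pos ha (hp s)).le
    nlinarith

end DipoleBounds

/-! ### Integrability of the flux up to the initial time -/

theorem exists_finset_mul_dipoleCoeff_le_sum {a δ t x₀ : ℝ} {p : ℝ → ℝ} {A : Set ℝ} (ha : 0 < a)
    (hp : ∀ s, p s ∈ Ioo (-1) 1) (hδ : 0 < δ) (hA : A ∈ 𝓝[≠] x₀) :
    ∃ F : Finset ℝ, (∀ x ∈ F, x ∈ A) ∧ ∃ c, 0 < c ∧ ∀ s, ∀ τ ∈ Icc δ t,
      c * dipoleCoeff a p 0 s ≤ ∑ x ∈ F, |dipoleHeat a p x s τ| := by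
  obtain ⟨F, hFA, c, hc, hle⟩ := exists_finset_le_sum_abs_cosSeries (heatMode_pos 0 t)
    (summable_heatFreq_pow_mul_exp_mul_heatMode 2 hδ) hA
  refine ⟨F, hFA, c, hc, fun s τ hτ => ?_⟩
  have hw := dipoleCoeff_zero_pos ha (hp s)
  have hnormalized : (fun n => heatMode n τ * dipoleCoeff a p n s / dipoleCoeff a p 0 s) ∈
      coeffBox (fun n => heatFreq n ^ 2 * heatMode n δ) (heatMode 0 t) := by
    refine ⟨fun n => ?_, ?_⟩
    · rw [abs_div, abs_of_pos hw, div_le_iff₀ hw]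
      exact abs_heatMode_mul_dipoleCoeff_le ha (hp s) hτ.1 n
    · simpa only [mul_div_cancel_right₀ _ hw.ne'] using heatMode_antitone 0 hτ.2
  have hscale (x : ℝ) :
      |cosSeries (fun n => heatMode n τ * dipoleCoeff a p n s / dipoleCoeff a p 0 s) x| =
        |dipoleHeat a p x s τ| / dipoleCoeff a p 0 s := by
    rw [dipoleHeat_eq_cosSeries a p x s (hδ.trans_le hτ.1), ← abs_of_pos hw, ← abs_div,
      abs_of_pos hw]
    simp only [cosSeries, div_mul_eq_mul_div, tsum_div_const]
  have h := hle _ hnormalized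
  simp_rw [hscale] at h
  rwa [← Finset.sum_div, le_div_iff₀ hw] at h

namespace IsExtendedSolution

variable {T a x t t₁ x₀ x₁ x₂ q : ℝ} {fI : ℝ → ℝ} {f : ℝ → ℝ → ℝ} {p lam : ℝ → ℝ}

theorem integrableOn_dipoleCoeff_mul_flux (h : IsExtendedSolution T a fI f p lam) (ht : 0 < t)
    (hgood : ∀ᶠ x in 𝓝[≠] x₀,
      IntervalIntegrable (fun s => lam s * dipoleHeat a p x s (t - s)) volume 0 t) :
    IntegrableOn (fun s => dipoleCoeff a p 0 s * lam s) (Ioc 0 (t / 2)) := by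
  obtain ⟨F, hF, c, hc, hle⟩ := exists_finset_mul_dipoleCoeff_le_sum (t := t) h.a_pos h.curve_mem
    (half_pos ht) hgood
  have hdom : IntegrableOn (fun s => c⁻¹ * ∑ x ∈ F, |lam s * dipoleHeat a p x s (t - s)|)
      (Ioc 0 (t / 2)) := by
    refine Integrable.const_mul (integrable_finsetSum _ fun x hx => Integrable.abs ?_) _
    exact ((intervalIntegrable_iff_integrableOn_Ioc_of_le ht.le).1 (hF x hx)).mono_set
      (Ioc_subset_Ioc_right (half_le_self ht.le))
  refine hdom.mono' ((measurable_dipoleCoeff h.measurable_curve a 0).aestronglyMeasurable.mul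
    h.aestronglyMeasurable_flux.restrict) ?_
  filter_upwards [ae_restrict_mem measurableSet_Ioc] with s hs
  have hlam := h.flux_nonneg s
  rw [Real.norm_of_nonneg (mul_nonneg (dipoleCoeff_zero_pos h.a_pos (h.curve_mem s)).le hlam)]
  simp_rw [abs_mul, abs_of_nonneg hlam, ← Finset.mul_sum]
  rw [le_inv_mul_iff₀ hc, ← mul_assoc, mul_comm (lam s)]
  exact mul_le_mul_of_nonneg_right (hle s (t - s) ⟨by linarith [hs.2], by linarith [hs.1]⟩) hlam

theorem integral_eq_of_integrableOn_dipoleCoeff_mul_flux (h : IsExtendedSolution T a fI f p lam)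
    (ht : t ∈ Ioo 0 T) (hw : IntegrableOn (fun s => dipoleCoeff a p 0 s * lam s) (Ioc 0 t))
    (hx : x ∈ Icc (-1) 1) :
    ∫ z in (-1)..x, f z t =
      initialPrim fI x t + ∫ s in (0 : ℝ)..t, lam s * dipolePrim a p x s (t - s) := by
  obtain ⟨B, hB, hle⟩ := exists_abs_dipoleHeat_le h.a_pos h.curve_mem (half_pos ht.1)
  have hw₀ (s : ℝ) : 0 ≤ 2 * B * (dipoleCoeff a p 0 s * lam s) :=
    mul_nonneg (by positivity) (mul_nonneg (dipoleCoeff_zero_pos h.a_pos (h.curve_mem s)).le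
      (h.flux_nonneg s))
  refine h.integral_eq_of_le ht (D := fun s => 2 * B * (dipoleCoeff a p 0 s * lam s) +
    (Ioc (t / 2) t).indicator (fun s => 2 * lam s) s) ?_ (fun s hs => ?_) hx
  · refine ((hw.mono_set Ioo_subset_Ioc_self).const_mul _).add (Integrable.integrableOn ?_)
    rw [integrable_indicator_iff measurableSet_Ioc]
    exact (h.integrableOn_flux (t / 2) t (half_pos ht.1) ht.2).const_mul 2
  · rcases le_or_gt s (t / 2) with hearly | hlate
    · rw [indicator_of_notMem fun hs' => hearly.not_gt hs'.1, add_zero]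
      have hint : ∫ z in (-1)..1, |dipoleHeat a p z s (t - s)| ≤
          ∫ _ in (-1 : ℝ)..1, B * dipoleCoeff a p 0 s :=
        intervalIntegral.integral_mono_on (by norm_num)
          ((continuous_dipoleHeat a p s _).abs.intervalIntegrable _ _) (by simp)
          fun z _ => hle z s (t - s) (by linarith)
      rw [intervalIntegral.integral_const, smul_eq_mul] at hint
      exact (mul_le_mul_of_nonneg_left hint (h.flux_nonneg s)).trans_eq (by ring)
    · rw [indicator_of_mem (show s ∈ Ioc (t / 2) t from ⟨hlate, hs.2.le⟩)]
      linarith [hw₀ s, mul_le_mul_of_nonneg_left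
        (integral_abs_dipoleHeat_le a p s (sub_pos.2 hs.2)) (h.flux_nonneg s)]

theorem tendsto_integral_flux_mul_dipolePrim (h : IsExtendedSolution T a fI f p lam)
    (ht₁ : 0 < t₁) (hw : IntegrableOn (fun s => dipoleCoeff a p 0 s * lam s) (Ioc 0 t₁))
    (hx : x ∈ Ioo (-1) 1) :
    Tendsto (fun t => ∫ s in (0 : ℝ)..t, lam s * dipolePrim a p x s (t - s)) (𝓝[>] 0) (𝓝 0) := by
  obtain ⟨C, hle⟩ := exists_abs_dipolePrim_le h.a_pos h.curve_mem hx
  refine squeeze_zero_norm' (a := fun t => C * ∫ s in (0 : ℝ)..t, dipoleCoeff a p 0 s * lam s) ?_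
    (by simpa using (tendsto_integral_nhdsGT_zero ht₁ hw).const_mul C)
  filter_upwards [Ioo_mem_nhdsGT (lt_min ht₁ one_pos)] with t ht
  rw [← intervalIntegral.integral_const_mul]
  refine intervalIntegral.norm_integral_le_of_norm_le ht.1.le ?_
    (((intervalIntegrable_iff_integrableOn_Ioc_of_le ht.1.le).2 (hw.mono_set
      (Ioc_subset_Ioc_right (lt_min_iff.1 ht.2).1.le))).const_mul C)
  filter_upwards [Measure.ae_ne volume t] with s hst hs
  have hs' : 0 < t - s := sub_pos.2 (hs.2.lt_of_ne hst)
  rw [norm_mul, Real.norm_of_nonneg (h.flux_nonneg s), mul_comm, ← mul_assoc]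
  exact mul_le_mul_of_nonneg_right
    (hle s (t - s) hs' (by linarith [hs.1, (lt_min_iff.1 ht.2).2])) (h.flux_nonneg s)

theorem tendsto_integral_of_integrableOn_dipoleCoeff_mul_flux
    (h : IsExtendedSolution T a fI f p lam) (ht₁ : t₁ ∈ Ioo 0 T)
    (hw : IntegrableOn (fun s => dipoleCoeff a p 0 s * lam s) (Ioc 0 t₁))
    (hx₁ : x₁ ∈ Ioo (-1) 1) (hx₂ : x₂ ∈ Ioo (-1) 1) :
    Tendsto (fun t => ∫ z in x₁..x₂, f z t) (𝓝[>] 0) (𝓝 (∫ z in x₁..x₂, fI z)) := by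
  have hlim (x : ℝ) (hx : x ∈ Ioo (-1) 1) :
      Tendsto (fun t => ∫ z in (-1)..x, f z t) (𝓝[>] 0) (𝓝 (∫ z in (-1)..x, fI z)) := by
    have hsum := (tendsto_initialPrim h.continuous_initial hx).add
      (h.tendsto_integral_flux_mul_dipolePrim ht₁.1 hw hx)
    rw [add_zero] at hsum
    refine hsum.congr' ?_
    filter_upwards [Ioo_mem_nhdsGT ht₁.1] with t ht
    exact (h.integral_eq_of_integrableOn_dipoleCoeff_mul_flux ⟨ht.1, ht.2.trans ht₁.2⟩
      (hw.mono_set (Ioc_subset_Ioc_right ht.2.le)) (Ioo_subset_Icc_self hx)).symm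
  have hfI (u v : ℝ) := h.continuous_initial.intervalIntegrable (μ := volume) u v
  rw [← intervalIntegral.integral_interval_sub_left (hfI (-1) x₂) (hfI (-1) x₁)]
  refine ((hlim x₂ hx₂).sub (hlim x₁ hx₁)).congr' ?_
  filter_upwards [Ioo_mem_nhdsGT (ht₁.1.trans ht₁.2)] with t ht
  have hf (v : ℝ) (hv : v ∈ Ioo (-1) 1) : IntervalIntegrable (fun z => f z t) volume (-1) v :=
    ((h.integrableOn t ht).mono_set
      (ordConnected_Icc.uIcc_subset (by simp) (Ioo_subset_Icc_self hv))).intervalIntegrable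
  exact intervalIntegral.integral_interval_sub_left (hf x₂ hx₂) (hf x₁ hx₁)

theorem eventually_lt_curve (h : IsExtendedSolution T a fI f p lam) (ht₁ : t₁ ∈ Ioo 0 T)
    (hw : IntegrableOn (fun s => dipoleCoeff a p 0 s * lam s) (Ioc 0 t₁))
    (hx₁ : -1 < x₁) (hx : x₁ < x₂) (hx₂ : x₂ < 1) (hfI : 0 < ∫ z in x₁..x₂, fI z) :
    ∀ᶠ t in 𝓝[>] 0, x₁ < p t := by
  have hlim := h.tendsto_integral_of_integrableOn_dipoleCoeff_mul_flux ht₁ hw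
    ⟨hx₁, hx.trans hx₂⟩ ⟨hx₁.trans hx, hx₂⟩
  filter_upwards [hlim.eventually (lt_mem_nhds hfI), Ioo_mem_nhdsGT (ht₁.1.trans ht₁.2)]
    with t hpos ht
  by_contra! hle
  refine hpos.not_ge ?_
  rw [intervalIntegral.integral_of_le hx.le]
  exact setIntegral_nonpos measurableSet_Ioc fun z hz =>
    (h.neg_right t ht z ⟨hle.trans_lt hz.1, hz.2.trans hx₂.le⟩).le

theorem eventually_curve_lt (h : IsExtendedSolution T a fI f p lam) (ht₁ : t₁ ∈ Ioo 0 T)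
    (hw : IntegrableOn (fun s => dipoleCoeff a p 0 s * lam s) (Ioc 0 t₁))
    (hx₁ : -1 < x₁) (hx : x₁ < x₂) (hx₂ : x₂ < 1) (hfI : ∫ z in x₁..x₂, fI z < 0) :
    ∀ᶠ t in 𝓝[>] 0, p t < x₂ := by
  have hlim := h.tendsto_integral_of_integrableOn_dipoleCoeff_mul_flux ht₁ hw
    ⟨hx₁, hx.trans hx₂⟩ ⟨hx₁.trans hx, hx₂⟩
  filter_upwards [hlim.eventually (gt_mem_nhds hfI), Ioo_mem_nhdsGT (ht₁.1.trans ht₁.2)]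
    with t hneg ht
  by_contra! hle
  refine hneg.not_ge ?_
  rw [intervalIntegral.integral_of_le hx.le, integral_Ioc_eq_integral_Ioo]
  exact setIntegral_nonneg measurableSet_Ioo fun z hz =>
    (h.pos_left t ht z ⟨(hx₁.trans hz.1).le, hz.2.trans_le hle⟩).le

theorem integrableOn_flux_of_eventually_curve_mem (h : IsExtendedSolution T a fI f p lam)
    (ht₁ : 0 < t₁) (hw : IntegrableOn (fun s => dipoleCoeff a p 0 s * lam s) (Ioc 0 t₁))
    (hx₁ : -1 < x₁) (hx₂ : x₂ < 1) (hcurve : ∀ᶠ t in 𝓝[>] 0, p t ∈ Ioo x₁ x₂) (ht : t < T) :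
    IntegrableOn lam (Ioc 0 t) := by
  obtain ⟨d, hd, hd'⟩ := mem_nhdsGT_iff_exists_Ioc_subset.1
    (hcurve.and (Ioc_mem_nhdsGT ht₁))
  set c := min a (min (1 - x₂) (1 + x₁))
  have hc : 0 < c := lt_min h.a_pos (lt_min (by linarith) (by linarith))
  have hinit : IntegrableOn lam (Ioc 0 d) := by
    refine ((hw.mono_set fun s hs => (hd' hs).2).const_mul (1 / (2 * c ^ 2))).mono'
      h.aestronglyMeasurable_flux.restrict ?_
    filter_upwards [ae_restrict_mem measurableSet_Ioc] with s hs
    have habar : c ≤ abar a p s := min_le_min le_rfl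
      (min_le_min (by linarith [(hd' hs).1.2]) (by linarith [(hd' hs).1.1]))
    have hcoeff : 2 * c ^ 2 ≤ dipoleCoeff a p 0 s :=
      le_trans (by gcongr) (two_mul_abar_sq_le_dipoleCoeff_zero h.a_pos (h.curve_mem s))
    rw [Real.norm_of_nonneg (h.flux_nonneg s), ← mul_assoc, one_div_mul_eq_div]
    exact le_mul_of_one_le_left (h.flux_nonneg s) ((one_le_div (by positivity)).2 hcoeff)
  refine (hinit.union (h.integrableOn_flux d t hd ht)).mono_set fun s hs => ?_
  exact (le_or_gt s d).imp (fun hsd => ⟨hs.1, hsd⟩) fun hds => ⟨hds, hs.2⟩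

theorem integrableOn_flux_of_integrableOn_dipoleCoeff_mul_flux
    (h : IsExtendedSolution T a fI f p lam) (hq : q ∈ Ioo (-1) 1)
    (hpos : ∀ y ∈ Ico (-1) q, 0 < fI y) (hneg : ∀ y ∈ Ioc q 1, fI y < 0) (ht₁ : t₁ ∈ Ioo 0 T)
    (hw : IntegrableOn (fun s => dipoleCoeff a p 0 s * lam s) (Ioc 0 t₁)) (ht : t < T) :
    IntegrableOn lam (Ioc 0 t) := by
  have hfI (u v : ℝ) := h.continuous_initial.intervalIntegrable (μ := volume) u v
  obtain ⟨y₁, hy₁, hy₁q⟩ := exists_between hq.1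
  obtain ⟨x₁, hx₁, hxy₁⟩ := exists_between hy₁
  obtain ⟨y₂, hqy₂, hy₂⟩ := exists_between hq.2
  obtain ⟨x₂, hyx₂, hx₂⟩ := exists_between hy₂
  have hlt : ∀ᶠ t in 𝓝[>] 0, x₁ < p t :=
    h.eventually_lt_curve ht₁ hw hx₁ hxy₁ (hy₁q.trans hq.2)
      (intervalIntegral.intervalIntegral_pos_of_pos_on (hfI _ _)
        (fun z hz => hpos z ⟨(hx₁.trans hz.1).le, hz.2.trans hy₁q⟩) hxy₁)
  have hgt : ∀ᶠ t in 𝓝[>] 0, p t < x₂ := by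
    refine h.eventually_curve_lt ht₁ hw (hq.1.trans hqy₂) hyx₂ hx₂ (neg_pos.1 ?_)
    rw [← intervalIntegral.integral_neg]
    exact intervalIntegral.intervalIntegral_pos_of_pos_on (hfI _ _).neg
      (fun z hz => neg_pos.2 (hneg z ⟨hqy₂.trans hz.1, (hz.2.trans hx₂).le⟩)) hyx₂
  exact h.integrableOn_flux_of_eventually_curve_mem ht₁.1 hw hx₁ hx₂ (hlt.and hgt) ht

theorem integrableOn_flux_Ioc_zero (h : IsExtendedSolution T a fI f p lam) {L : NNReal}
    (hL : LipschitzWith L fI) (hq : q ∈ Ioo (-1) 1) (hpos : ∀ y ∈ Ico (-1) q, 0 < fI y)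
    (hneg : ∀ y ∈ Ioc q 1, fI y < 0) (ht : t < T) : IntegrableOn lam (Ioc 0 t) := by
  by_cases hbad : ∀ t ∈ Ioo 0 T, ∃ᶠ x in 𝓝[≠] (p t),
      ¬ IntervalIntegrable (fun s => lam s * dipoleHeat a p x s (t - s)) volume 0 t
  · exact h.integrableOn_flux_of_forall_frequently_not_integrable hL hbad ht
  · push Not at hbad
    obtain ⟨t₁, ht₁, hgood⟩ := hbad
    exact h.integrableOn_flux_of_integrableOn_dipoleCoeff_mul_flux hq hpos hneg
      ⟨half_pos ht₁.1, (half_lt_self ht₁.1).trans ht₁.2⟩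
      (h.integrableOn_dipoleCoeff_mul_flux ht₁.1 hgood) ht

end IsExtendedSolution

/-! ### Conservation of the masses -/

theorem deriv_nonpos_of_forall_Ioc_le {g : ℝ → ℝ} {q β : ℝ} (hq : q < β)
    (hg : DifferentiableAt ℝ g q) (hle : ∀ x ∈ Ioc q β, g x ≤ g q) : deriv g q ≤ 0 := by
  refine le_of_tendsto ((hasDerivWithinAt_iff_tendsto_slope' self_notMem_Ioi).1
    hg.hasDerivAt.hasDerivWithinAt) ?_
  filter_upwards [Ioo_mem_nhdsGT hq] with x hx
  rw [slope_def_field]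
  exact div_nonpos_of_nonpos_of_nonneg (sub_nonpos.2 (hle x (Ioo_subset_Ioc_self hx)))
    (sub_nonneg.2 hx.1.le)

namespace IsSolutionP

variable {T a t x : ℝ} {fI g : ℝ → ℝ} {f : ℝ → ℝ → ℝ} {p : ℝ → ℝ}

theorem flux_nonneg (h : IsSolutionP a fI (Ioo 0 T) f p) (ht : t ∈ Ioo 0 T) : 0 ≤ flux f p t :=
  neg_nonneg.2 <| deriv_nonpos_of_forall_Ioc_le (h.p_mem t ht).2 (h.diff_at t ht) fun x hx => by
    simpa only [h.zero_at t ht] using (h.neg_right t ht x hx).le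

theorem eq_initialHeat_add (h : IsSolutionP a fI (Ioo 0 T) f p) (hfg : EqOn g fI (Icc (-1) 1))
    (ht : t ∈ Ioo 0 T) (hx : x ∈ Icc (-1) 1) :
    f x t = initialHeat g x t + ∫ s in (0 : ℝ)..t, (Ioo 0 T).indicator (flux f p) s *
      dipoleHeat a ((Ioo 0 T).indicator p) x s (t - s) := by
  rw [h.duhamel t ht x hx]
  congr 1
  · refine intervalIntegral.integral_congr fun y hy => ?_
    rw [uIcc_of_le (by norm_num)] at hy
    rw [hfg hy, heatGamma_eq_neumannHeat ht.1, mul_comm]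
  · simp_rw [intervalIntegral.integral_of_le ht.1.le, integral_Ioc_eq_integral_Ioo]
    refine setIntegral_congr_fun measurableSet_Ioo fun s hs => ?_
    have hs' : s ∈ Ioo 0 T := ⟨hs.1, hs.2.trans ht.2⟩
    have hτ : 0 < t - s := sub_pos.2 hs.2
    simp only [dipoleHeat, leftSource, rightSource, abar, indicator_of_mem hs',
      heatGamma_eq_neumannHeat hτ]
    rw [mul_comm]

theorem isExtendedSolution (h : IsSolutionP a fI (Ioo 0 T) f p) (ha : 0 < a) (hg : Continuous g)
    (hfg : EqOn g fI (Icc (-1) 1))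
    (hint : ∀ t ∈ Ioo 0 T, IntegrableOn (fun x => f x t) (Icc (-1) 1)) :
    IsExtendedSolution T a g f ((Ioo 0 T).indicator p) ((Ioo 0 T).indicator (flux f p)) where
  a_pos := ha
  continuous_initial := hg
  continuousOn_curve := h.p_cont.congr fun t ht => indicator_of_mem ht _
  measurable_curve := by
    classical
    rw [← piecewise_eq_indicator]
    exact h.p_cont.measurable_piecewise continuousOn_const measurableSet_Ioo
  curve_mem t := by
    by_cases ht : t ∈ Ioo 0 T
    · simpa only [indicator_of_mem ht] using h.p_mem t ht
    · simp [indicator_of_notMem ht]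
  pos_left t ht := by simpa only [indicator_of_mem ht] using h.pos_left t ht
  neg_right t ht := by simpa only [indicator_of_mem ht] using h.neg_right t ht
  hasDerivAt_curve t ht := by
    simpa only [indicator_of_mem ht, flux, neg_neg] using (h.diff_at t ht).hasDerivAt
  flux_nonneg := indicator_nonneg fun _ => h.flux_nonneg
  aestronglyMeasurable_flux :=
    (aestronglyMeasurable_indicator_iff measurableSet_Ioo).2 h.flux_loc_int.aestronglyMeasurable
  integrableOn_flux s t hs ht := by
    have hsub : Icc s t ⊆ Ioo 0 T := Icc_subset_Ioo hs ht
    refine ((h.flux_loc_int.integrableOn_compact_subset hsub isCompact_Icc).congr_fun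
      (fun z hz => ?_) measurableSet_Icc).mono_set Ioc_subset_Icc_self
    rw [indicator_of_mem (hsub hz)]
  duhamel _ ht _ hx := h.eq_initialHeat_add hfg ht hx
  integrableOn := hint

end IsSolutionP

theorem IsExtendedSolution.masses_eq_initial {T a q t : ℝ} {fI : ℝ → ℝ} {f : ℝ → ℝ → ℝ}
    {p lam : ℝ → ℝ} (h : IsExtendedSolution T a fI f p lam) {L : NNReal} (hL : LipschitzWith L fI)
    (hq : q ∈ Ioo (-1) 1) (hpos : ∀ y ∈ Ico (-1) q, 0 < fI y) (hneg : ∀ y ∈ Ioc q 1, fI y < 0)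
    (ht : t ∈ Ioo 0 T) :
    ∫ z in (-1)..(p t), f z t = ∫ z in (-1)..q, fI z ∧
      ∫ z in (p t)..1, f z t = ∫ z in q..1, fI z := by
  have hlam : ∀ t < T, IntegrableOn lam (Ioc 0 t) := fun t ht =>
    h.integrableOn_flux_Ioc_zero hL hq hpos hneg ht
  have hbuyers := h.integral_curve_eq_initial hlam hq (fun y hy => (hpos y hy).le)
    (fun y hy => (hneg y hy).le) ht
  have htotal := h.integral_total_eq_initial ht (hlam t ht.2)
  have hfI (u v : ℝ) := h.continuous_initial.intervalIntegrable (μ := volume) u v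
  have hf (u v : ℝ) (hu : u ∈ Icc (-1) 1) (hv : v ∈ Icc (-1) 1) :
      IntervalIntegrable (fun z => f z t) volume u v :=
    ((h.integrableOn t ht).mono_set (ordConnected_Icc.uIcc_subset hu hv)).intervalIntegrable
  have hp := Ioo_subset_Icc_self (h.curve_mem t)
  refine ⟨hbuyers, ?_⟩
  rw [← intervalIntegral.integral_add_adjacent_intervals (hf (-1) _ (by simp) hp)
      (hf _ 1 hp (by simp)), ← intervalIntegral.integral_add_adjacent_intervals (hfI (-1) q)
      (hfI q 1), hbuyers] at htotal
  exact add_left_cancel htotal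

theorem statement19_general {T a q : ℝ} {fI : ℝ → ℝ} {f : ℝ → ℝ → ℝ} {p : ℝ → ℝ} (ha : 0 < a)
    {L : NNReal} (hL : LipschitzOnWith L fI (Icc (-1) 1)) (hq : q ∈ Ioo (-1) 1)
    (hpos : ∀ x ∈ Ico (-1) q, 0 < fI x) (hneg : ∀ x ∈ Ioc q 1, fI x < 0)
    (hsol : IsSolutionP a fI (Ioo 0 T) f p)
    (hint : ∀ t ∈ Ioo 0 T, IntegrableOn (fun x => f x t) (Icc (-1) 1)) :
    ∀ t ∈ Ioo 0 T,
      ∫ x in (-1)..(p t), f x t = ∫ x in (-1)..q, fI x ∧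
        ∫ x in (p t)..1, f x t = ∫ x in q..1, fI x := by
  intro t ht
  obtain ⟨g, hgL, hfg⟩ := hL.extend_real
  have hg : EqOn g fI (Icc (-1) 1) := hfg.symm
  have hleft : Icc (-1) q ⊆ Icc (-1) 1 := Icc_subset_Icc_right hq.2.le
  have hright : Icc q 1 ⊆ Icc (-1) 1 := Icc_subset_Icc_left hq.1.le
  have hmasses := (hsol.isExtendedSolution ha hgL.continuous hg hint).masses_eq_initial hgL hq
    (fun y hy => (hpos y hy).trans_eq (hfg (hleft (Ico_subset_Icc_self hy))))
    (fun y hy => (hg (hright (Ioc_subset_Icc_self hy))).trans_lt (hneg y hy)) ht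
  rwa [indicator_of_mem ht, intervalIntegral.integral_congr (g := fI) (a := -1)
      (hg.mono ((uIcc_of_le hq.1.le).trans_subset hleft)),
    intervalIntegral.integral_congr (g := fI) (b := 1)
      (hg.mono ((uIcc_of_le hq.2.le).trans_subset hright))] at hmasses

/-- Conservation of the buyer and vendor masses: for all `t ∈ (0,T)`,
`∫_{−1}^{p(t)} f(x,t) dx = ∫_{−1}^{p_I} f_I(x) dx` and
`∫_{p(t)}^{1} f(x,t) dx = ∫_{p_I}^{1} f_I(x) dx`. -/
theorem statement19 (T a a₀ lamI : ℝ) (fI : ℝ → ℝ) (pI : ℝ)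
    (f : ℝ → ℝ → ℝ) (p : ℝ → ℝ)
    (ha : a ∈ Set.Ioo (0:ℝ) 1) (ha₀ : 0 < a₀) (ha₀' : a₀ < a / 4)
    (hI : IsInitialDatum fI pI a₀ lamI)
    (hsol : IsSolutionP a fI (Set.Ioo 0 T) f p)
    (hint : ∀ t ∈ Set.Ioo (0:ℝ) T,
      MeasureTheory.IntegrableOn (fun x => f x t) (Set.Icc (-1:ℝ) 1)) :
    ∀ t ∈ Set.Ioo (0:ℝ) T,
      (∫ x in (-1:ℝ)..(p t), f x t) = (∫ x in (-1:ℝ)..pI, fI x) ∧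
      (∫ x in (p t)..1, f x t) = (∫ x in pI..1, fI x) := by
  obtain ⟨L, hL⟩ := (hI.smooth.of_le one_le_two).exists_lipschitzOnWith (by simp)
    (convex_Icc _ _) isCompact_Icc
  exact statement19_general ha.1 hL hI.pI_mem hI.pos_left hI.neg_right hsol hint
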